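/- arXiv:1609.07027 — 16 statements merged into one kernel-verified Lean document; each statement's English description precedes it below -/
import Mathlib

section
/- Consider a 1-server PIR scheme for a database of k records of 1 bit each (so R = 1), with k ≥ 1. Then for every query q_1 ∈ Q_1 that lies in the support of D_ℓ for some ℓ, the number of distinct responses c_1 that are possible for q_1 (i.e., returned by the server for some database X) is at least 2^k. -/
open scoped ENNReal

/-- An `n`-server PIR scheme for a database of `k` records of `R` bits each. -/
structure PIRScheme (n k R : ℕ) where
  /-- The query set for each server. -/
  Q : Fin n → Type
  /-- Each query set is finite. -/
  fintypeQ : ∀ r, Fintype (Q r)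
  /-- The storage size (in bits) of each server. -/
  s : Fin n → ℕ
  /-- The encoding map of each server. -/
  E : (r : Fin n) → (Fin k → Fin R → Bool) → (Fin (s r) → Bool)
  /-- For each record index `ℓ`, a probability distribution on query tuples. -/
  D : Fin k → PMF ((r : Fin n) → Q r)
  /-- The response length of each server on each query. -/
  d : (r : Fin n) → Q r → ℕ
  /-- The deterministic response map of each server. -/
  resp : (r : Fin n) → (q : Q r) → (Fin (s r) → Bool) → (Fin (d r q) → Bool)
  /-- The reconstruction function. -/
  recon : (ℓ : Fin k) → (q : (r : Fin n) → Q r) →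
    ((r : Fin n) → (Fin (d r (q r)) → Bool)) → (Fin R → Bool)
  /-- Correctness. -/
  correct : ∀ (X : Fin k → Fin R → Bool) (ℓ : Fin k) (q : (r : Fin n) → Q r),
    q ∈ (D ℓ).support →
    recon ℓ q (fun r => resp r (q r) (E r X)) = X ℓ
  /-- Privacy: the marginal of each query component does not depend on `ℓ`. -/
  privacy : ∀ (r : Fin n) (ℓ ℓ' : Fin k),
    (D ℓ).map (fun q => q r) = (D ℓ').map (fun q => q r)

attribute [instance] PIRScheme.fintypeQ

/-- A query tuple is possible if it lies in the support of `D ℓ` for some `ℓ`. -/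
def PIRScheme.Possible {n k R : ℕ} (S : PIRScheme n k R)
    (q : (r : Fin n) → S.Q r) : Prop :=
  ∃ ℓ, q ∈ (S.D ℓ).support

/-- The download complexity: the maximum, over possible query tuples, of the
total number of downloaded bits. -/
noncomputable def PIRScheme.downloadComplexity {n k R : ℕ} (S : PIRScheme n k R) : ℕ :=
  letI : DecidablePred S.Possible := Classical.decPred _
  (Finset.univ.filter S.Possible).sup (fun q => ∑ r, S.d r (q r))

/-- For a 1-server PIR scheme for `k ≥ 1` records of 1 bit each,
every possible query admits at least `2^k` distinct possible responses. -/
theorem one_server_response_count (k : ℕ) (hk : 1 ≤ k) (S : PIRScheme 1 k 1)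
    (q : (r : Fin 1) → S.Q r) (hq : S.Possible q) :
    2 ^ k ≤ Set.ncard {c : Fin (S.d 0 (q 0)) → Bool |
      ∃ X : Fin k → Fin 1 → Bool, S.resp 0 (q 0) (S.E 0 X) = c} := by
  obtain ⟨ℓ₀, h₀⟩ := hq
  have hall : ∀ ℓ, q ∈ (S.D ℓ).support := by
    intro ℓ
    have h1 : q 0 ∈ ((S.D ℓ₀).map (fun q => q 0)).support :=
      (PMF.mem_support_map_iff _ _ _).2 ⟨q, h₀, rfl⟩
    rw [S.privacy 0 ℓ₀ ℓ] at h1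
    obtain ⟨q', hq', he⟩ := (PMF.mem_support_map_iff _ _ _).1 h1
    have hqq : q' = q := by
      funext r
      obtain rfl : r = 0 := Subsingleton.elim _ _
      exact he
    exact hqq ▸ hq'
  have hinj : Function.Injective (fun X : Fin k → Fin 1 → Bool => S.resp 0 (q 0) (S.E 0 X)) := by
    intro X Y hXY
    have hXY' : (fun r => S.resp r (q r) (S.E r X)) = (fun r => S.resp r (q r) (S.E r Y)) := by
      funext r
      obtain rfl : r = 0 := Subsingleton.elim _ _
      exact hXY
    funext ℓ
    rw [← S.correct X ℓ q (hall ℓ), ← S.correct Y ℓ q (hall ℓ), hXY']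
  change 2 ^ k ≤ (Set.range (fun X : Fin k → Fin 1 → Bool => S.resp 0 (q 0) (S.E 0 X))).ncard
  rw [← Set.image_univ, Set.ncard_image_of_injective _ hinj, Set.ncard_univ,
    Nat.card_eq_fintype_card]
  simp
end

section
/- Consider an n-server PIR scheme for a database of k records of R bits each, with k ≥ 1, and let d be an integer with 0 ≤ d ≤ R. Fix q_1 ∈ Q_1, and write query tuples as (q_1, q_other) where q_other collects the queries to servers 2, …, n, and response tuples as (c_1, c_other). Suppose that for every possible query tuple of the form (q_1, q_other), the number of tuples c_other for which there exists c_1 such that (c_1, c_other) is possible for (q_1, q_other) is at most 2^d. Then for every possible query tuple (q_1, q'_other), the number of values c_1 for which there exists c_other such that (c_1, c_other) is possible for (q_1, q'_other) is at least 2^{k(R−d)}. -/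
open scoped ENNReal

/-- Theorem 2 of the paper. If for every possible query tuple with
first component `q1` there are at most `2^d` possible response tuples of the other
servers, then for every possible query tuple with first component `q1` there are at
least `2^(k(R-d))` possible responses of the first server. -/
theorem first_server_response_count (n k R d : ℕ) (hn : 0 < n) (hk : 1 ≤ k)
    (hdR : d ≤ R) (S : PIRScheme n k R) (q1 : S.Q ⟨0, hn⟩)
    (H : ∀ q : (r : Fin n) → S.Q r, S.Possible q → q ⟨0, hn⟩ = q1 →
      Set.ncard {co : (r : {r : Fin n // r ≠ ⟨0, hn⟩}) → (Fin (S.d r.1 (q r.1)) → Bool) |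
        ∃ c1 : Fin (S.d ⟨0, hn⟩ (q ⟨0, hn⟩)) → Bool, ∃ X : Fin k → Fin R → Bool,
          S.resp ⟨0, hn⟩ (q ⟨0, hn⟩) (S.E ⟨0, hn⟩ X) = c1 ∧
          ∀ r : {r : Fin n // r ≠ ⟨0, hn⟩}, S.resp r.1 (q r.1) (S.E r.1 X) = co r}
        ≤ 2 ^ d) :
    ∀ q : (r : Fin n) → S.Q r, S.Possible q → q ⟨0, hn⟩ = q1 →
      2 ^ (k * (R - d)) ≤
        Set.ncard {c1 : Fin (S.d ⟨0, hn⟩ (q ⟨0, hn⟩)) → Bool |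
          ∃ co : (r : {r : Fin n // r ≠ ⟨0, hn⟩}) → (Fin (S.d r.1 (q r.1)) → Bool),
            ∃ X : Fin k → Fin R → Bool,
              S.resp ⟨0, hn⟩ (q ⟨0, hn⟩) (S.E ⟨0, hn⟩ X) = c1 ∧
              ∀ r : {r : Fin n // r ≠ ⟨0, hn⟩}, S.resp r.1 (q r.1) (S.E r.1 X) = co r} := by
  intro q hq hq1
  have hex : ∀ ℓ : Fin k, ∃ p : (r : Fin n) → S.Q r,
      p ∈ (S.D ℓ).support ∧ p ⟨0, hn⟩ = q1 := by
    intro ℓ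
    obtain ⟨m, hm⟩ := hq
    have h1 : q1 ∈ ((S.D m).map (fun q => q ⟨0, hn⟩)).support := by
      rw [PMF.mem_support_map_iff]
      exact ⟨q, hm, hq1⟩
    rw [S.privacy ⟨0, hn⟩ m ℓ, PMF.mem_support_map_iff] at h1
    exact h1
  choose p hp hp1 using hex
  set A := {c1 : Fin (S.d ⟨0, hn⟩ (q ⟨0, hn⟩)) → Bool |
          ∃ co : (r : {r : Fin n // r ≠ ⟨0, hn⟩}) → (Fin (S.d r.1 (q r.1)) → Bool),
            ∃ X : Fin k → Fin R → Bool,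
              S.resp ⟨0, hn⟩ (q ⟨0, hn⟩) (S.E ⟨0, hn⟩ X) = c1 ∧
              ∀ r : {r : Fin n // r ≠ ⟨0, hn⟩}, S.resp r.1 (q r.1) (S.E r.1 X) = co r} with hA
  let B : (ℓ : Fin k) → Set ((r : {r : Fin n // r ≠ ⟨0, hn⟩}) →
      (Fin (S.d r.1 (p ℓ r.1)) → Bool)) := fun ℓ => {co |
        ∃ c1 : Fin (S.d ⟨0, hn⟩ (p ℓ ⟨0, hn⟩)) → Bool, ∃ X : Fin k → Fin R → Bool,
          S.resp ⟨0, hn⟩ (p ℓ ⟨0, hn⟩) (S.E ⟨0, hn⟩ X) = c1 ∧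
          ∀ r : {r : Fin n // r ≠ ⟨0, hn⟩}, S.resp r.1 (p ℓ r.1) (S.E r.1 X) = co r}
  have hB : ∀ ℓ, Nat.card (B ℓ) ≤ 2 ^ d := fun ℓ => H (p ℓ) ⟨ℓ, hp ℓ⟩ (hp1 ℓ)
  let F : (Fin k → Fin R → Bool) → A × ((ℓ : Fin k) → B ℓ) := fun X =>
    (⟨S.resp ⟨0, hn⟩ (q ⟨0, hn⟩) (S.E ⟨0, hn⟩ X), fun r => S.resp r.1 (q r.1) (S.E r.1 X), X,
      rfl, fun _ => rfl⟩,
     fun ℓ => ⟨fun r => S.resp r.1 (p ℓ r.1) (S.E r.1 X), _, X, rfl, fun _ => rfl⟩)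
  have hF : Function.Injective F := by
    intro X Y hXY
    have h1 : S.resp ⟨0, hn⟩ (q ⟨0, hn⟩) (S.E ⟨0, hn⟩ X)
        = S.resp ⟨0, hn⟩ (q ⟨0, hn⟩) (S.E ⟨0, hn⟩ Y) :=
      congrArg (fun z => z.1.1) hXY
    rw [hq1] at h1
    funext ℓ
    have h2 : (fun r : {r : Fin n // r ≠ ⟨0, hn⟩} => S.resp r.1 (p ℓ r.1) (S.E r.1 X))
        = fun r : {r : Fin n // r ≠ ⟨0, hn⟩} => S.resp r.1 (p ℓ r.1) (S.E r.1 Y) :=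
      congrArg (fun z => (z.2 ℓ).1) hXY
    rw [← S.correct X ℓ (p ℓ) (hp ℓ), ← S.correct Y ℓ (p ℓ) (hp ℓ)]
    congr 1
    funext r
    by_cases hr : r = ⟨0, hn⟩
    · subst hr
      rw [← hp1 ℓ] at h1
      exact h1
    · exact congrFun h2 ⟨r, hr⟩
  have hc := Nat.card_le_card_of_injective F hF
  have hprod : ∏ ℓ, Nat.card (B ℓ) ≤ 2 ^ (k * d) := by
    calc ∏ ℓ, Nat.card (B ℓ) ≤ ∏ _ℓ : Fin k, 2 ^ d := Finset.prod_le_prod' fun ℓ _ => hB ℓ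
      _ = 2 ^ (k * d) := by simp [← pow_mul, mul_comm]
  have hX : Nat.card (Fin k → Fin R → Bool) = 2 ^ (k * (R - d)) * 2 ^ (k * d) := by
    rw [← pow_add, ← mul_add, Nat.sub_add_cancel hdR]
    simp [← pow_mul, mul_comm]
  rw [hX, Nat.card_prod, Nat.card_pi] at hc
  exact Nat.le_of_mul_le_mul_right (hc.trans (Nat.mul_le_mul_left _ hprod)) (by positivity)
end

section
/- Let x be a non-negative integer, and consider an n-server PIR scheme for a database of k records of R bits each with R ≥ 1, whose download complexity is at most R + x. If k ≥ x + 2, then for every possible query tuple (q_1, …, q_n) and every server r, the number of bits downloaded from server r satisfies d_r(q_r) ≤ x. -/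
open scoped ENNReal

/-- Theorem 3 of the paper. If a PIR scheme for `k ≥ x + 2` records
of `R ≥ 1` bits has download complexity at most `R + x`, then at most `x` bits are
downloaded from any server on any possible query. -/
theorem per_server_download_bound (n k R x : ℕ) (hR : 1 ≤ R) (hk : x + 2 ≤ k)
    (S : PIRScheme n k R) (hD : S.downloadComplexity ≤ R + x) :
    ∀ q : (r : Fin n) → S.Q r, S.Possible q → ∀ r : Fin n, S.d r (q r) ≤ x := by
  intro q hq r
  obtain ⟨ℓ₀, hℓ₀⟩ := hq
  by_contra hcon
  have hlt : x < S.d r (q r) := not_le.mp hcon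
  have hex : ∀ ℓ : Fin k, ∃ p : (r : Fin n) → S.Q r, p ∈ (S.D ℓ).support ∧ p r = q r := by
    intro ℓ
    have h1 : q r ∈ ((S.D ℓ₀).map (fun q => q r)).support :=
      (PMF.mem_support_map_iff _ _ _).2 ⟨q, hℓ₀, rfl⟩
    rw [S.privacy r ℓ₀ ℓ] at h1
    exact (PMF.mem_support_map_iff _ _ _).1 h1
  choose p hp hpr using hex
  have hsum : ∀ ℓ, ∑ r, S.d r (p ℓ r) ≤ R + x := by
    intro ℓ
    refine le_trans ?_ hD
    classical
    unfold PIRScheme.downloadComplexity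
    exact Finset.le_sup (f := fun q : (r : Fin n) → S.Q r => ∑ r, S.d r (q r))
      (by simpa using ⟨ℓ, hp ℓ⟩)
  have hsum' : ∀ ℓ, S.d r (q r) + ∑ r' : {r' // r' ≠ r}, S.d r' (p ℓ r') ≤ R + x := by
    intro ℓ
    have h := hsum ℓ
    rw [Fintype.sum_eq_add_sum_subtype_ne _ r, hpr ℓ] at h
    exact h
  let Φ : (Fin k → Fin R → Bool) → (Fin (S.d r (q r)) → Bool) ×
      ((ℓ : Fin k) → (r' : {r' // r' ≠ r}) → Fin (S.d r' (p ℓ r')) → Bool) :=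
    fun X => (S.resp r (q r) (S.E r X), fun ℓ r' => S.resp r' (p ℓ r') (S.E r' X))
  have hΦ : Function.Injective Φ := by
    intro X Y hXY
    have h1 : S.resp r (q r) (S.E r X) = S.resp r (q r) (S.E r Y) := congrArg Prod.fst hXY
    have h2 := congrArg Prod.snd hXY
    funext ℓ
    rw [← S.correct X ℓ (p ℓ) (hp ℓ), ← S.correct Y ℓ (p ℓ) (hp ℓ)]
    congr 1
    funext r'
    by_cases hr : r' = r
    · subst hr
      rw [← hpr ℓ] at h1
      exact h1
    · exact congrFun (congrFun h2 ℓ) ⟨r', hr⟩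
  have hcard := Fintype.card_le_of_injective Φ hΦ
  simp only [Fintype.card_prod, Fintype.card_pi, Fintype.card_bool, Finset.prod_const,
    Finset.card_univ, Fintype.card_fin, Finset.prod_pow_eq_pow_sum, ← pow_mul, ← pow_add] at hcard
  have hexp := (Nat.pow_le_pow_iff_right (by norm_num : 1 < 2)).1 hcard
  have hs : k * S.d r (q r) + ∑ ℓ, ∑ r' : {r' // r' ≠ r}, S.d r' (p ℓ r') ≤ k * (R + x) := by
    have h := Finset.sum_le_sum (fun ℓ (_ : ℓ ∈ Finset.univ) => hsum' ℓ)
    simpa [Finset.sum_add_distrib] using h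
  obtain ⟨t, ht⟩ : ∃ t, S.d r (q r) = x + 1 + t := ⟨S.d r (q r) - (x + 1), by omega⟩
  rw [ht] at hs hexp
  obtain ⟨m, rfl⟩ : ∃ m, k = x + 2 + m := ⟨k - (x + 2), by omega⟩
  have h0 := Nat.zero_le (x * t)
  have h1 := Nat.zero_le (m * t)
  nlinarith
end

section
/- Every n-server PIR scheme for a database of k records of R bits each, with k ≥ 2 and R ≥ 1, has download complexity at least R + 1. -/
open scoped ENNReal

theorem PIRScheme.resp_eq_of_record_eq {n k R : ℕ} (S : PIRScheme n k R) (ℓ : Fin k)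
    (q : (r : Fin n) → S.Q r) (hq : q ∈ (S.D ℓ).support) (hd : ∑ r, S.d r (q r) ≤ R)
    (X Y : Fin k → Fin R → Bool) (h : X ℓ = Y ℓ) (r : Fin n) :
    S.resp r (q r) (S.E r X) = S.resp r (q r) (S.E r Y) := by
  have hsurj : Function.Surjective (S.recon ℓ q) := fun y =>
    ⟨_, S.correct (fun _ => y) ℓ q hq⟩
  have hcard : Fintype.card ((r : Fin n) → (Fin (S.d r (q r)) → Bool))
      = Fintype.card (Fin R → Bool) := by
    apply le_antisymm
    · simp only [Fintype.card_pi, Fintype.card_bool, Finset.prod_const, Finset.card_univ,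
        Fintype.card_fin, Finset.prod_pow_eq_pow_sum]
      exact Nat.pow_le_pow_right (by norm_num) hd
    · exact Fintype.card_le_of_surjective _ hsurj
  have hinj := ((Fintype.bijective_iff_surjective_and_card _).2 ⟨hsurj, hcard⟩).1
  have := hinj ((S.correct X ℓ q hq).trans (h.trans (S.correct Y ℓ q hq).symm))
  exact congrFun this r

/-- Corollary 1 of the paper; due to Shah et al.. Every `n`-server
PIR scheme for `k ≥ 2` records of `R ≥ 1` bits each has download complexity at
least `R + 1`. -/
theorem download_complexity_ge (n k R : ℕ) (hk : 2 ≤ k) (hR : 1 ≤ R)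
    (S : PIRScheme n k R) :
    R + 1 ≤ S.downloadComplexity := by
  by_contra hlt
  have hd : ∀ ℓ, ∀ q ∈ (S.D ℓ).support, ∑ r, S.d r (q r) ≤ R := by
    intro ℓ q hq
    have h1 : ∑ r, S.d r (q r) ≤ S.downloadComplexity := by
      classical
      unfold PIRScheme.downloadComplexity
      exact Finset.le_sup (f := fun q : (r : Fin n) → S.Q r => ∑ r, S.d r (q r))
        (Finset.mem_filter.2 ⟨Finset.mem_univ _, ⟨ℓ, hq⟩⟩)
    omega
  let a : Fin k := ⟨0, by omega⟩
  let b : Fin k := ⟨1, by omega⟩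
  have hab : b ≠ a := by simp [a, b]
  obtain ⟨q, hq⟩ := (S.D a).support_nonempty
  have hconst : ∀ X Y r, S.resp r (q r) (S.E r X) = S.resp r (q r) (S.E r Y) := by
    intro X Y r
    have hm : q r ∈ ((S.D a).map (fun q => q r)).support := by
      rw [PMF.support_map]
      exact ⟨q, hq, rfl⟩
    rw [S.privacy r a b, PMF.support_map] at hm
    obtain ⟨q', hq', hr⟩ := hm
    have e1 := S.resp_eq_of_record_eq a q hq (hd a q hq) X (Function.update X b (Y b))
      (by rw [Function.update_of_ne hab.symm]) r
    have e2 := S.resp_eq_of_record_eq b q' hq' (hd b q' hq') (Function.update X b (Y b)) Y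
      (by simp) r
    simp only at hr
    rw [hr] at e2
    exact e1.trans e2
  have h1 := S.correct (fun _ _ => true) a q hq
  have h2 := S.correct (fun _ _ => false) a q hq
  rw [funext (hconst (fun _ _ => true) (fun _ _ => false)), h2] at h1
  have := congrFun h1 ⟨0, by omega⟩
  simp at this
end

section
/- Consider an n-server PIR scheme for a database of k records of R bits each, with n ≥ 2, R ≥ 1, and k ≥ ⌈R/(n−1)⌉ + 1. Then the download complexity D of the scheme satisfies (n−1)·D ≥ n·R, i.e., D is at least n/(n−1) times R. -/
open scoped ENNReal

open Classical in
/-- Databases agreeing with `x` on the first `j` records. -/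
noncomputable def pirCyl {k R : ℕ} (j : ℕ) (x : Fin k → Fin R → Bool) :
    Finset (Fin k → Fin R → Bool) :=
  Finset.univ.filter (fun X => ∀ i : Fin k, (i : ℕ) < j → X i = x i)

open Classical in
/-- Responses of server `r` to `q` over the databases of `pirCyl j x`. -/
noncomputable def pirImg {n k R : ℕ} (S : PIRScheme n k R) (j : ℕ)
    (x : Fin k → Fin R → Bool) (r : Fin n) (q : S.Q r) :
    Finset (Fin (S.d r q) → Bool) :=
  (pirCyl j x).image (fun X => S.resp r q (S.E r X))

theorem pirImg_card_le {n k R : ℕ} (S : PIRScheme n k R) (j : ℕ)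
    (x : Fin k → Fin R → Bool) (r : Fin n) (q : S.Q r) :
    (pirImg S j x r q).card ≤ 2 ^ S.d r q := by
  refine (Finset.card_le_univ _).trans ?_
  simp

open Classical in
theorem pir_core {n k R : ℕ} (S : PIRScheme n k R) (j : ℕ) (hj : j < k)
    (x : Fin k → Fin R → Bool) (r₀ : Fin n) (q : (r : Fin n) → S.Q r)
    (hq : q ∈ (S.D ⟨j, hj⟩).support)
    (h : (pirImg S j x r₀ (q r₀)).card * 2 ^ j ≤ 2 ^ S.d r₀ (q r₀)) :
    ∃ x' : Fin k → Fin R → Bool, R + j ≤ ∑ r, S.d r (q r) ∧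
      ∀ r, (pirImg S (j + 1) x' r (q r)).card * 2 ^ (R + j) ≤ 2 ^ (∑ r, S.d r (q r)) := by
  let F : (Fin k → Fin R → Bool) → ((r : Fin n) → (Fin (S.d r (q r)) → Bool)) :=
    fun X r => S.resp r (q r) (S.E r X)
  let T := (pirCyl j x).image F
  have hT : T.card * 2 ^ j ≤ 2 ^ (∑ r, S.d r (q r)) := by
    have h1 : T ⊆ Fintype.piFinset (fun r => pirImg S j x r (q r)) := by
      intro c hc
      obtain ⟨X, hX, rfl⟩ := Finset.mem_image.1 hc
      rw [Fintype.mem_piFinset]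
      intro r
      exact Finset.mem_image.2 ⟨X, hX, rfl⟩
    have h2 := Finset.card_le_card h1
    rw [Fintype.card_piFinset, ← Finset.mul_prod_erase _ _ (Finset.mem_univ r₀)] at h2
    rw [← Finset.prod_pow_eq_pow_sum, ← Finset.mul_prod_erase _ _ (Finset.mem_univ r₀)]
    have h3 : ∏ r ∈ Finset.univ.erase r₀, (pirImg S j x r (q r)).card ≤
        ∏ r ∈ Finset.univ.erase r₀, 2 ^ S.d r (q r) :=
      Finset.prod_le_prod' (fun r _ => pirImg_card_le S j x r (q r))
    calc T.card * 2 ^ j ≤ _ := Nat.mul_le_mul_right _ h2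
      _ = ((pirImg S j x r₀ (q r₀)).card * 2 ^ j) *
          ∏ r ∈ Finset.univ.erase r₀, (pirImg S j x r (q r)).card := by ring
      _ ≤ _ := Nat.mul_le_mul h h3
  -- pigeonhole over the value of record `j`
  obtain ⟨y, -, hy⟩ : ∃ y ∈ (Finset.univ : Finset (Fin R → Bool)),
      (T.filter (fun c => S.recon ⟨j, hj⟩ q c = y)).card * 2 ^ R ≤ T.card := by
    by_contra hcon
    push Not at hcon
    have h4 := Finset.card_eq_sum_card_fiberwise (s := T) (t := Finset.univ)
      (f := fun c => S.recon ⟨j, hj⟩ q c) (fun _ _ => Finset.mem_coe.2 (Finset.mem_univ _))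
    have h5 := Finset.sum_lt_sum_of_nonempty (Finset.univ_nonempty) hcon
    rw [← Finset.sum_mul, ← h4] at h5
    simp at h5
    rw [mul_comm] at h5
    exact lt_irrefl _ h5
  set x' := Function.update x ⟨j, hj⟩ y with hx'
  have hsub : ∀ X ∈ pirCyl (j + 1) x',
      F X ∈ T.filter (fun c => S.recon ⟨j, hj⟩ q c = y) := by
    intro X hX
    simp only [pirCyl, Finset.mem_filter, Finset.mem_univ, true_and] at hX
    refine Finset.mem_filter.2 ⟨Finset.mem_image.2 ⟨X, ?_, rfl⟩, ?_⟩
    · simp only [pirCyl, Finset.mem_filter, Finset.mem_univ, true_and]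
      intro i hi
      rw [hX i (by omega), hx', Function.update_of_ne]
      rintro rfl
      simp at hi
    · rw [S.correct X _ q hq, hX ⟨j, hj⟩ (by simp), hx', Function.update_self]
  have hbound : (T.filter (fun c => S.recon ⟨j, hj⟩ q c = y)).card * 2 ^ (R + j) ≤
      2 ^ (∑ r, S.d r (q r)) := by
    rw [pow_add, ← mul_assoc]
    exact (Nat.mul_le_mul_right _ hy).trans hT
  refine ⟨x', ?_, fun r => ?_⟩
  · have hpos : 0 < (T.filter (fun c => S.recon ⟨j, hj⟩ q c = y)).card :=
      Finset.card_pos.2 ⟨F x', hsub x' (by simp [pirCyl])⟩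
    refine (Nat.pow_le_pow_iff_right (le_refl 2)).1 ?_
    exact (Nat.le_mul_of_pos_left _ hpos).trans hbound
  · refine (Nat.mul_le_mul_right _ ?_).trans hbound
    have h6 : pirImg S (j + 1) x' r (q r) ⊆
        (T.filter (fun c => S.recon ⟨j, hj⟩ q c = y)).image (fun c => c r) := by
      intro c hc
      obtain ⟨X, hX, rfl⟩ := Finset.mem_image.1 hc
      exact Finset.mem_image.2 ⟨F X, hsub X hX, rfl⟩
    exact (Finset.card_le_card h6).trans Finset.card_image_le

theorem pir_sum_le {n k R : ℕ} (S : PIRScheme n k R) (ℓ : Fin k)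
    (q : (r : Fin n) → S.Q r) (hq : q ∈ (S.D ℓ).support) :
    ∑ r, S.d r (q r) ≤ S.downloadComplexity := by
  classical
  unfold PIRScheme.downloadComplexity
  exact Finset.le_sup (f := fun q : (r : Fin n) → S.Q r => ∑ r, S.d r (q r))
    (Finset.mem_filter.2 ⟨Finset.mem_univ _, ⟨ℓ, hq⟩⟩)

/-- Privacy: a possible query component can be completed to a tuple for any record. -/
theorem pir_complete {n k R : ℕ} (S : PIRScheme n k R) (ℓ ℓ' : Fin k)
    (q : (r : Fin n) → S.Q r) (hq : q ∈ (S.D ℓ).support) (r : Fin n) :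
    ∃ q' ∈ (S.D ℓ').support, q' r = q r := by
  have h : q r ∈ ((S.D ℓ).map (fun q => q r)).support := by
    rw [PMF.mem_support_map_iff]
    exact ⟨q, hq, rfl⟩
  rw [S.privacy r ℓ ℓ', PMF.mem_support_map_iff] at h
  exact h

theorem pir_induct {n k R : ℕ} (hn : 2 ≤ n) (S : PIRScheme n k R)
    (hD : (n - 1) * S.downloadComplexity < n * R) (j : ℕ) (hj : j < k) :
    ∃ (x : Fin k → Fin R → Bool) (r : Fin n) (q : (r : Fin n) → S.Q r),
      q ∈ (S.D ⟨j, hj⟩).support ∧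
      (pirImg S j x r (q r)).card * 2 ^ j ≤ 2 ^ S.d r (q r) := by
  induction j with
  | zero =>
    obtain ⟨q, hq⟩ := (S.D ⟨0, hj⟩).support_nonempty
    exact ⟨fun _ _ => false, ⟨0, by omega⟩, q, hq, by simpa using pirImg_card_le S _ _ _ _⟩
  | succ j ih =>
    obtain ⟨x, r₀, q, hq, h⟩ := ih (by omega)
    obtain ⟨x', -, h2⟩ := pir_core S j (by omega) x r₀ q hq h
    have hsum := pir_sum_le S _ q hq
    obtain ⟨r, -, hr⟩ : ∃ r ∈ (Finset.univ : Finset (Fin n)),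
        ∑ r, S.d r (q r) ≤ n * S.d r (q r) := by
      by_contra hcon
      push Not at hcon
      have h5 := Finset.sum_lt_sum_of_nonempty ⟨(⟨0, by omega⟩ : Fin n), Finset.mem_univ _⟩ hcon
      rw [← Finset.mul_sum] at h5
      simp at h5
    obtain ⟨q', hq', hqr⟩ := pir_complete S ⟨j, by omega⟩ ⟨j + 1, hj⟩ q hq r
    refine ⟨x', r, q', hq', ?_⟩
    rw [hqr]
    have h2r := h2 r
    generalize (∑ r, S.d r (q r)) = D' at *
    have hd : D' + 1 ≤ S.d r (q r) + R := by
      by_contra hcon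
      obtain ⟨m, rfl⟩ : ∃ m, n = m + 1 := ⟨n - 1, by omega⟩
      simp only [Nat.add_sub_cancel] at hD
      have h7 : m * D' ≤ m * S.downloadComplexity := Nat.mul_le_mul_left _ hsum
      have h8 : (m + 1) * (S.d r (q r) + R) ≤ (m + 1) * D' := Nat.mul_le_mul_left _ (by omega)
      nlinarith
    refine Nat.le_of_mul_le_mul_right ?_ (Nat.pow_pos (n := D') (show 0 < 2 by norm_num))
    calc (pirImg S (j + 1) x' r (q r)).card * 2 ^ (j + 1) * 2 ^ D'
        = (pirImg S (j + 1) x' r (q r)).card * 2 ^ (j + (D' + 1)) := by ring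
      _ ≤ (pirImg S (j + 1) x' r (q r)).card * 2 ^ (j + (S.d r (q r) + R)) :=
          Nat.mul_le_mul_left _ (Nat.pow_le_pow_right (by norm_num) (by omega))
      _ = (pirImg S (j + 1) x' r (q r)).card * 2 ^ (R + j) * 2 ^ S.d r (q r) := by ring
      _ ≤ 2 ^ D' * 2 ^ S.d r (q r) := Nat.mul_le_mul_right _ h2r
      _ = _ := by ring

/-- Theorem 4 of the paper. An `n`-server PIR scheme with `n ≥ 2`,
`R ≥ 1` and `k ≥ ⌈R/(n-1)⌉ + 1` has download complexity `D` with `(n-1)·D ≥ n·R`. -/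
theorem download_complexity_n_servers (n k R : ℕ) (hn : 2 ≤ n) (hR : 1 ≤ R)
    (hk : (R + n - 2) / (n - 1) + 1 ≤ k) (S : PIRScheme n k R) :
    n * R ≤ (n - 1) * S.downloadComplexity := by
  by_contra hcon
  push Not at hcon
  have hk0 : 0 < k := lt_of_lt_of_le (Nat.succ_pos _) hk
  obtain ⟨x, r, q, hq, h⟩ := pir_induct hn S hcon (k - 1) (by omega)
  obtain ⟨-, h1, -⟩ := pir_core S (k - 1) (by omega) x r q hq h
  have h2 := pir_sum_le S _ q hq
  obtain ⟨m, rfl⟩ : ∃ m, n = m + 1 := ⟨n - 1, by omega⟩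
  obtain ⟨t, rfl⟩ : ∃ t, k = t + 1 := ⟨k - 1, by omega⟩
  simp only [Nat.add_sub_cancel] at *
  have h3 : (R + (m + 1) - 2) / m < t + 1 := by omega
  rw [Nat.div_lt_iff_lt_mul (by omega)] at h3
  have h4 : R ≤ t * m := by
    have : (t + 1) * m = t * m + m := by ring
    omega
  have h5 : m * (R + t) ≤ m * S.downloadComplexity := Nat.mul_le_mul_left _ (h1.trans h2)
  nlinarith
end

section
/- Consider an n-server PIR scheme for a database of k records of R bits each, with k ≥ 3 and R ≥ 1, whose download complexity is exactly R + 1. Choose ℓ uniformly at random from Fin k and then draw the query tuple (q_1, …, q_n) from D_ℓ, and let α be the probability that the total number of downloaded bits Σ_r d_r(q_r) is at most R. Then α ≤ (R+1)/(kR+1). -/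
open scoped ENNReal

/-- Query `a` to server `r` has a nonconstant response depending only on record `l`. -/
def PIRScheme.Only {n k R : ℕ} (S : PIRScheme n k R) (r : Fin n) (l : Fin k) (a : S.Q r) : Prop :=
  (∀ X Y : Fin k → Fin R → Bool, X l = Y l → S.resp r a (S.E r X) = S.resp r a (S.E r Y)) ∧
  ∃ X Y : Fin k → Fin R → Bool, S.resp r a (S.E r X) ≠ S.resp r a (S.E r Y)

theorem PIRScheme.Only.unique {n k R : ℕ} {S : PIRScheme n k R} {r : Fin n} {l m : Fin k}
    {a : S.Q r} (h : S.Only r l a) (h' : S.Only r m a) : l = m := by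
  by_contra hne
  obtain ⟨h1, X, Y, hXY⟩ := h
  apply hXY
  have e1 := h1 X (Function.update Y l (X l)) (by simp)
  have e2 := h'.1 (Function.update Y l (X l)) Y (by simp [Function.update_of_ne (Ne.symm hne)])
  exact e1.trans e2

/-- Servers not depending on record `l` are useless. -/
theorem PIRScheme.lower {n k R : ℕ} (S : PIRScheme n k R) (l : Fin k)
    (q : (r : Fin n) → S.Q r) (hq : q ∈ (S.D l).support) (T : Finset (Fin n))
    (hT : ∀ r ∈ T, ∃ m, m ≠ l ∧ S.Only r m (q r)) :
    R ≤ ∑ r ∈ Tᶜ, S.d r (q r) := by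
  let X : (Fin R → Bool) → Fin k → Fin R → Bool := fun y => Function.update (fun _ _ => false) l y
  let f : (Fin R → Bool) → ((r : {r // r ∈ Tᶜ}) → (Fin (S.d r (q r)) → Bool)) :=
    fun y r => S.resp r (q r) (S.E r (X y))
  have hf : Function.Injective f := by
    intro y z hyz
    have hy := S.correct (X y) l q hq
    have hz := S.correct (X z) l q hq
    have e : (fun r => S.resp r (q r) (S.E r (X y))) =
        (fun r => S.resp r (q r) (S.E r (X z))) := by
      funext r
      by_cases hr : r ∈ T
      · obtain ⟨m, hm, ho⟩ := hT r hr
        exact ho.1 _ _ (by simp [X, Function.update_of_ne hm])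
      · exact congrFun hyz ⟨r, by simpa using hr⟩
    rw [e, hz] at hy
    simpa [X] using hy.symm
  have := Fintype.card_le_of_injective f hf
  simp only [Fintype.card_pi, Finset.prod_const, Fintype.card_bool, Finset.card_univ,
    Fintype.card_fin] at this
  rw [Finset.prod_pow_eq_pow_sum] at this
  have h2 := (Nat.pow_le_pow_iff_right (by norm_num : 1 < 2)).1 this
  rwa [← Finset.attach_eq_univ, Finset.sum_attach Tᶜ (fun r => S.d r (q r))] at h2

theorem PIRScheme.good {n k R : ℕ} (S : PIRScheme n k R) (l : Fin k)
    (q : (r : Fin n) → S.Q r) (hq : q ∈ (S.D l).support)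
    (hs : ∑ r, S.d r (q r) ≤ R) (r : Fin n) (hr : S.d r (q r) ≠ 0) : S.Only r l (q r) := by
  let X : (Fin R → Bool) → Fin k → Fin R → Bool := fun y => Function.update (fun _ _ => false) l y
  let F : (Fin k → Fin R → Bool) → ((r : Fin n) → (Fin (S.d r (q r)) → Bool)) :=
    fun Z r => S.resp r (q r) (S.E r Z)
  have hF : ∀ Z, S.recon l q (F Z) = Z l := fun Z => S.correct Z l q hq
  have hinj : Function.Injective (fun y => F (X y)) := by
    intro y z hyz
    have h := congrArg (S.recon l q) hyz
    simpa [hF, X] using h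
  have hbij : Function.Bijective (fun y => F (X y)) := by
    rw [Fintype.bijective_iff_injective_and_card]
    refine ⟨hinj, le_antisymm (Fintype.card_le_of_injective _ hinj) ?_⟩
    simp only [Fintype.card_pi, Finset.prod_const, Fintype.card_bool, Finset.card_univ,
      Fintype.card_fin]
    rw [Finset.prod_pow_eq_pow_sum]
    exact Nat.pow_le_pow_right (by norm_num) hs
  have key : ∀ Z, F Z = F (X (Z l)) := by
    intro Z
    obtain ⟨y, hy⟩ := hbij.2 (F Z)
    have h := congrArg (S.recon l q) hy
    simp only [hF] at h
    have : y = Z l := by simpa [X] using h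
    rw [← this]; exact hy.symm
  refine ⟨fun Y Z hYZ => ?_, ?_⟩
  · have : F Y = F Z := by rw [key Y, key Z, hYZ]
    exact congrFun this r
  · obtain ⟨y, hy⟩ := hbij.2 (fun _ _ => true)
    obtain ⟨z, hz⟩ := hbij.2 (fun _ _ => false)
    refine ⟨X y, X z, fun h => ?_⟩
    have h1 : S.resp r (q r) (S.E r (X y)) = fun _ => true := congrFun hy r
    have h2 : S.resp r (q r) (S.E r (X z)) = fun _ => false := congrFun hz r
    rw [h1, h2] at h
    simpa using congrFun h ⟨0, Nat.pos_of_ne_zero hr⟩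

open Classical in
/-- Weight. -/
noncomputable def PIRScheme.w {n k R : ℕ} (S : PIRScheme n k R) (r : Fin n) (l : Fin k)
    (a : S.Q r) : ℕ := if S.Only r l a then S.d r a else 0

theorem PIRScheme.w_good {n k R : ℕ} (S : PIRScheme n k R) (l : Fin k)
    (q : (r : Fin n) → S.Q r) (hq : q ∈ (S.D l).support) (hs : ∑ r, S.d r (q r) ≤ R) :
    R ≤ ∑ r, S.w r l (q r) := by
  have h := S.lower l q hq ∅ (by simp)
  simp only [Finset.compl_empty] at h
  refine h.trans (Finset.sum_le_sum fun r _ => ?_)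
  by_cases hr : S.d r (q r) = 0
  · simp [hr]
  · simp [PIRScheme.w, S.good l q hq hs r hr]

theorem PIRScheme.w_bad {n k R : ℕ} (S : PIRScheme n k R) (hD : S.downloadComplexity = R + 1)
    (l : Fin k) (q : (r : Fin n) → S.Q r) (hq : q ∈ (S.D l).support) :
    ∑ m ∈ Finset.univ.erase l, ∑ r, S.w r m (q r) +
      (if ∑ r, S.d r (q r) ≤ R then 1 else 0) ≤ 1 := by
  classical
  let T : Finset (Fin n) := Finset.univ.filter fun r => ∃ m, m ≠ l ∧ S.Only r m (q r)
  have h1 := S.lower l q hq T (by intro r hr; simpa [T] using hr)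
  have h2 : ∑ r, S.d r (q r) ≤ R + 1 := by
    rw [← hD]
    unfold PIRScheme.downloadComplexity
    exact Finset.le_sup (f := fun q : (r : Fin n) → S.Q r => ∑ r, S.d r (q r))
      (Finset.mem_filter.2 ⟨Finset.mem_univ _, ⟨l, hq⟩⟩)
  have h3 := Finset.sum_add_sum_compl T (fun r => S.d r (q r))
  have h4 : ∑ m ∈ Finset.univ.erase l, ∑ r, S.w r m (q r) ≤ ∑ r ∈ T, S.d r (q r) := by
    rw [Finset.sum_comm, Finset.sum_filter]
    refine Finset.sum_le_sum fun r _ => ?_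
    split_ifs with h
    · obtain ⟨m, hm, ho⟩ := h
      rw [Finset.sum_eq_single_of_mem m (by simp [hm])]
      · unfold PIRScheme.w; split_ifs <;> simp
      · intro b _ hb
        have : ¬ S.Only r b (q r) := fun h => hb (h.unique ho)
        simp [PIRScheme.w, this]
    · refine le_of_eq (Finset.sum_eq_zero fun m hm => ?_)
      have : ¬ S.Only r m (q r) := fun h' => h ⟨m, by simpa using hm, h'⟩
      simp [PIRScheme.w, this]
  split_ifs <;> omega

theorem PIRScheme.priv {n k R : ℕ} (S : PIRScheme n k R) (r : Fin n) (l m : Fin k)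
    (f : S.Q r → ℝ≥0∞) : ∑ q, S.D l q * f (q r) = ∑ q, S.D m q * f (q r) := by
  classical
  have key : ∀ l, ∑ q, S.D l q * f (q r) = ∑ a, (S.D l).map (fun q => q r) a * f a := by
    intro l
    simp only [PMF.map_apply, tsum_fintype, Finset.sum_mul]
    rw [Finset.sum_comm]
    refine Finset.sum_congr rfl fun q _ => ?_
    rw [Finset.sum_eq_single (q r)]
    · simp
    · intro b _ hb; simp [hb]
    · simp
  rw [key, key, S.privacy r l m]

/-- Theorem 5 of the paper. In a PIR scheme for `k ≥ 3` records of
`R ≥ 1` bits with download complexity exactly `R + 1`, if the record index `ℓ` is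
chosen uniformly from `Fin k` and the query tuple is drawn from `D ℓ`, then the
probability `α` that at most `R` bits are downloaded satisfies
`α ≤ (R+1)/(kR+1)`. -/
theorem prob_only_R_bits (n k R : ℕ) (hk : 3 ≤ k) (hR : 1 ≤ R)
    (S : PIRScheme n k R) (hD : S.downloadComplexity = R + 1) :
    (k : ℝ≥0∞)⁻¹ *
        ∑ ℓ : Fin k, ∑' q : (r : Fin n) → S.Q r,
          (if ∑ r : Fin n, S.d r (q r) ≤ R then S.D ℓ q else 0) ≤
      ((R : ℝ≥0∞) + 1) / ((k : ℝ≥0∞) * (R : ℝ≥0∞) + 1) := by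
  classical
  simp only [tsum_fintype]
  set α : Fin k → ℝ≥0∞ := fun l => ∑ q : (r : Fin n) → S.Q r,
          (if ∑ r : Fin n, S.d r (q r) ≤ R then S.D l q else 0) with hα
  have hone : ∀ l, ∑ q, S.D l q = 1 := fun l => by rw [← tsum_fintype (L := .unconditional _)]; exact (S.D l).tsum_coe
  have hα1 : ∀ l, α l ≤ 1 := by
    intro l
    rw [← hone l]
    refine Finset.sum_le_sum fun q _ => ?_
    split_ifs <;> simp
  let W : Fin k → Fin k → ℝ≥0∞ := fun l m => ∑ q, S.D l q * ((∑ r, S.w r m (q r) : ℕ) : ℝ≥0∞)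
  have hW : ∀ l l' m, W l m = W l' m := by
    intro l l' m
    simp only [W, Nat.cast_sum, Finset.mul_sum]
    rw [Finset.sum_comm, Finset.sum_comm (s := Finset.univ (α := (r : Fin n) → S.Q r))]
    exact Finset.sum_congr rfl fun r _ => S.priv r l l' (fun a => (S.w r m a : ℝ≥0∞))
  have hgood : ∀ l, R * α l ≤ W l l := by
    intro l
    simp only [hα, W, Finset.mul_sum]
    refine Finset.sum_le_sum fun q _ => ?_
    split_ifs with h
    · by_cases hq : S.D l q = 0
      · simp [hq]
      · rw [mul_comm]
        gcongr
        exact S.w_good l q ((PMF.mem_support_iff _ _).2 hq) h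
    · simp
  have hbad : ∀ l, ∑ m ∈ Finset.univ.erase l, W l m + α l ≤ 1 := by
    intro l
    rw [← hone l]
    simp only [hα, W]
    rw [Finset.sum_comm, ← Finset.sum_add_distrib]
    refine Finset.sum_le_sum fun q _ => ?_
    by_cases hq : S.D l q = 0
    · simp [hq]
    · have h := S.w_bad hD l q ((PMF.mem_support_iff _ _).2 hq)
      have h' : ((∑ m ∈ Finset.univ.erase l, ∑ r, S.w r m (q r) +
        (if ∑ r, S.d r (q r) ≤ R then 1 else 0) : ℕ) : ℝ≥0∞) ≤ 1 := by exact_mod_cast h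
      calc _ = S.D l q * ((∑ m ∈ Finset.univ.erase l, ∑ r, S.w r m (q r) +
        (if ∑ r, S.d r (q r) ≤ R then 1 else 0) : ℕ) : ℝ≥0∞) := by
            rw [Nat.cast_add, mul_add, Nat.cast_sum, Finset.mul_sum]
            congr 1
            split_ifs <;> simp
        _ ≤ S.D l q * 1 := by gcongr
        _ = _ := mul_one _
  have hl : ∀ l, R * ∑ m, α m + α l ≤ 1 + R := by
    intro l
    rw [← Finset.sum_erase_add _ _ (Finset.mem_univ l), mul_add, add_right_comm]
    refine add_le_add (le_trans ?_ (hbad l)) ?_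
    · gcongr
      rw [Finset.mul_sum]
      exact Finset.sum_le_sum fun m _ => (hgood m).trans (hW m l m).le
    · calc (R : ℝ≥0∞) * α l ≤ R * 1 := by gcongr; exact hα1 l
        _ = R := mul_one _
  have hsum := Finset.sum_le_sum fun l (_ : l ∈ Finset.univ) => hl l
  rw [Finset.sum_add_distrib] at hsum
  simp only [Finset.sum_const, Finset.card_univ, Fintype.card_fin, nsmul_eq_mul] at hsum
  have hk0 : (k : ℝ≥0∞) ≠ 0 := by simp; omega
  have hkt : (k : ℝ≥0∞) ≠ ⊤ := by simp
  rw [ENNReal.le_div_iff_mul_le (by simp) (by left; finiteness), mul_assoc,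
    ENNReal.inv_mul_le_iff hk0 hkt]
  calc _ = (k : ℝ≥0∞) * (R * ∑ m, α m) + ∑ m, α m := by ring
    _ ≤ _ := hsum
    _ = _ := by ring
end

section
/- For all integers k ≥ 1 and R ≥ 1 there exists an (R+1)-server PIR scheme for a database of k records of R bits each in which each server stores the entire kR-bit database (so each s_r = kR and the total storage is (R+1)kR bits), each query set Q_r consists of bit strings of length kR (so the upload complexity is kR(R+1)), and each server responds with exactly one bit to every query (so the download complexity is R + 1). -/
open scoped ENNReal

/-- The inner product mod 2 of two bit strings. -/
def pirIp {m : ℕ} (a x : Fin m → Bool) : ZMod 2 :=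
  ∑ j, if (a j && x j) then 1 else 0

/-- The offset added to the random query for server `r` when record `l` is wanted. -/
def pirOff {k R : ℕ} (l : Fin k) (r : Fin (R + 1)) : Fin (k * R) → Bool :=
  Fin.cases (fun _ => false) (fun i j => decide (j = finProdFinEquiv (l, i))) r

lemma pirIp_xor {m : ℕ} (a x : Fin m → Bool) (t : Fin m) :
    pirIp a x + pirIp (fun j => xor (a j) (decide (j = t))) x = if x t then 1 else 0 := by
  unfold pirIp
  rw [← Finset.sum_add_distrib, Finset.sum_eq_single t]
  · cases ha : a t <;> cases hx : x t <;> simp [ha]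
  · intro b _ hb
    simp only [hb, decide_false, Bool.xor_false]
    exact CharTwo.add_self_eq_zero _
  · simp

lemma zmod2_xor : ∀ u v : ZMod 2,
    xor (decide (u ≠ 0)) (decide (v ≠ 0)) = decide (u + v ≠ 0) := by decide

lemma map_uniform_xor {m : ℕ} (v : Fin m → Bool) :
    (PMF.uniformOfFintype (Fin m → Bool)).map (fun a j => xor (a j) (v j)) =
      PMF.uniformOfFintype (Fin m → Bool) := by
  ext b
  rw [PMF.map_apply, tsum_eq_single (fun j => xor (b j) (v j))]
  · simp
  · intro c hc
    rw [if_neg]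
    rintro rfl
    apply hc
    funext j
    simp

/-- The scheme of Construction 1. -/
noncomputable def pirOne (k R : ℕ) : PIRScheme (R + 1) k R where
  Q := fun _ => Fin (k * R) → Bool
  fintypeQ := fun _ => inferInstance
  s := fun _ => k * R
  E := fun _ X j => X (finProdFinEquiv.symm j).1 (finProdFinEquiv.symm j).2
  D := fun l => (PMF.uniformOfFintype (Fin (k * R) → Bool)).map
    (fun a r j => xor (a j) (pirOff l r j))
  d := fun _ _ => 1
  resp := fun _ q x _ => decide (pirIp q x ≠ 0)
  recon := fun _ _ c i => xor (c 0 0) (c i.succ 0)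
  correct := by
    intro X l q hq
    rw [PMF.mem_support_map_iff] at hq
    obtain ⟨a, _, rfl⟩ := hq
    funext i
    simp only [zmod2_xor]
    simp only [pirOff, Fin.cases_zero, Fin.cases_succ, Bool.xor_false]
    rw [pirIp_xor]
    simp
  privacy := by
    intro r l l'
    rw [PMF.map_comp, PMF.map_comp]
    exact (map_uniform_xor (pirOff l r)).trans (map_uniform_xor (pirOff l' r)).symm

/-- Construction 1 / Theorem 6 of the paper. There is an
`(R+1)`-server PIR scheme for `k` records of `R` bits each in which every server
stores the whole `kR`-bit database (total storage `(R+1)kR`), every query is a bit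
string of length `kR` (upload complexity `kR(R+1)`), and every server responds with
exactly one bit to every query (download complexity `R + 1`). -/
theorem construction_one (k R : ℕ) (hk : 1 ≤ k) (hR : 1 ≤ R) :
    ∃ S : PIRScheme (R + 1) k R,
      (∀ r, S.s r = k * R) ∧
      (∑ r, S.s r = (R + 1) * (k * R)) ∧
      (∀ r, S.Q r = (Fin (k * R) → Bool)) ∧
      (∀ r q, S.d r q = 1) ∧
      S.downloadComplexity = R + 1 := by
  refine ⟨pirOne k R, fun _ => rfl, ?_, fun _ => rfl, fun _ _ => rfl, ?_⟩
  · simp [pirOne]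
  · have hsum : ∀ q : (r : Fin (R + 1)) → (pirOne k R).Q r,
        ∑ r, (pirOne k R).d r (q r) = R + 1 := by
      intro q
      simp [pirOne]
    unfold PIRScheme.downloadComplexity
    simp only [hsum]
    apply Finset.sup_const
    obtain ⟨q, hq⟩ := ((pirOne k R).D ⟨0, hk⟩).support_nonempty
    exact ⟨q, by simpa using ⟨_, hq⟩⟩
end

section
/- For all integers k ≥ 1 and R ≥ 1 there exists an (R+1)-server PIR scheme for a database of k records of R bits each in which each server stores the entire kR-bit database (so the total storage is (R+1)kR bits), each query set Q_r consists of bit strings of length k·⌈log₂(R+1)⌉ (so the upload complexity is (R+1)·k·⌈log₂(R+1)⌉), and each server responds with exactly one bit to every query (so the download complexity is R + 1). -/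
open scoped ENNReal

theorem uniform_map_equiv {α : Type*} [Fintype α] [Nonempty α] (e : α ≃ α) :
    (PMF.uniformOfFintype α).map e = PMF.uniformOfFintype α := by
  classical
  ext b
  rw [PMF.map_apply, tsum_eq_single (e.symm b)]
  · simp
  · intro a ha
    rw [if_neg]
    rintro rfl
    simp at ha

/-- The bit (over the Boolean ring) computed by a server on the decoded query `a`. -/
def answerBit {k R : ℕ} (a : Fin k → Fin (R + 1)) (X : Fin k → Fin R → Bool) : Bool :=
  ∑ i, (Fin.cons false (X i) : Fin (R + 1) → Bool) (a i)

theorem answerBit_add {k R : ℕ} (X : Fin k → Fin R → Bool) (ℓ : Fin k)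
    (a b : Fin k → Fin (R + 1)) (j : Fin R) (ha : a ℓ = 0) (hb : b ℓ = j.succ)
    (h : ∀ i, i ≠ ℓ → a i = b i) :
    answerBit a X + answerBit b X = X ℓ j := by
  classical
  unfold answerBit
  rw [← Finset.sum_add_distrib, Finset.sum_eq_single ℓ]
  · rw [ha, hb, Fin.cons_zero, Fin.cons_succ]
    exact Bool.false_xor _
  · intro i _ hi
    rw [h i hi]
    exact Bool.xor_self _
  · simp

theorem exists_enc (k R : ℕ) :
    ∃ (enc : (Fin k → Fin (R + 1)) → (Fin (k * Nat.clog 2 (R + 1)) → Bool))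
      (dec : (Fin (k * Nat.clog 2 (R + 1)) → Bool) → (Fin k → Fin (R + 1))),
      ∀ a, dec (enc a) = a := by
  have h : Fintype.card (Fin k → Fin (R + 1)) ≤
      Fintype.card (Fin (k * Nat.clog 2 (R + 1)) → Bool) := by
    simp only [Fintype.card_fun, Fintype.card_fin, Fintype.card_bool]
    rw [mul_comm, pow_mul]
    exact Nat.pow_le_pow_left (Nat.le_pow_clog (by norm_num) _) _
  obtain ⟨f⟩ := Function.Embedding.nonempty_of_card_le h
  exact ⟨f, Function.invFun f, Function.leftInverse_invFun f.injective⟩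

/-- The scheme: server `r` receives the encoding of `a + r e_ℓ`, with `a` uniform. -/
noncomputable def shiftScheme (k R : ℕ)
    (enc : (Fin k → Fin (R + 1)) → (Fin (k * Nat.clog 2 (R + 1)) → Bool))
    (dec : (Fin (k * Nat.clog 2 (R + 1)) → Bool) → (Fin k → Fin (R + 1)))
    (hdec : ∀ a, dec (enc a) = a) : PIRScheme (R + 1) k R where
  Q := fun _ => Fin (k * Nat.clog 2 (R + 1)) → Bool
  fintypeQ := fun _ => inferInstance
  s := fun _ => k * R
  E := fun _ X i => X (finProdFinEquiv.symm i).1 (finProdFinEquiv.symm i).2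
  D := fun ℓ => (PMF.uniformOfFintype (Fin k → Fin (R + 1))).map
    (fun a r => enc (a + Pi.single ℓ r))
  d := fun _ _ => 1
  resp := fun _ q x _ => answerBit (dec q) (fun i j => x (finProdFinEquiv (i, j)))
  recon := fun ℓ q c j => c (-(dec (q 0) ℓ)) 0 + c (j.succ - dec (q 0) ℓ) 0
  correct := by
    intro X ℓ q hq
    rw [PMF.support_map] at hq
    obtain ⟨a, -, rfl⟩ := hq
    funext j
    simp only [hdec, Equiv.symm_apply_apply]
    apply answerBit_add
    · simp
    · simp
    · intro i hi
      simp [hi]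
  privacy := by
    have key : ∀ (r : Fin (R + 1)) (ℓ : Fin k),
        ((PMF.uniformOfFintype (Fin k → Fin (R + 1))).map
          (fun a (r : Fin (R + 1)) => enc (a + Pi.single ℓ r))).map (fun q => q r) =
        (PMF.uniformOfFintype (Fin k → Fin (R + 1))).map enc := by
      intro r ℓ
      conv_rhs => rw [← uniform_map_equiv (Equiv.addRight (Pi.single ℓ r))]
      rw [PMF.map_comp, PMF.map_comp]
      rfl
    intro r ℓ ℓ'
    rw [key, key]

/-- Construction 2 / Theorem 7 of the paper. There is an
`(R+1)`-server PIR scheme for `k` records of `R` bits each in which every server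
stores the whole `kR`-bit database (total storage `(R+1)kR`), every query is a bit
string of length `k⌈log₂(R+1)⌉` (upload complexity `(R+1)k⌈log₂(R+1)⌉`), and every
server responds with exactly one bit to every query (download complexity `R + 1`). -/
theorem construction_two (k R : ℕ) (hk : 1 ≤ k) (hR : 1 ≤ R) :
    ∃ S : PIRScheme (R + 1) k R,
      (∀ r, S.s r = k * R) ∧
      (∑ r, S.s r = (R + 1) * (k * R)) ∧
      (∀ r, S.Q r = (Fin (k * Nat.clog 2 (R + 1)) → Bool)) ∧
      (∀ r q, S.d r q = 1) ∧
      S.downloadComplexity = R + 1 := by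
  obtain ⟨enc, dec, hdec⟩ := exists_enc k R
  refine ⟨shiftScheme k R enc dec hdec, fun _ => rfl, ?_, fun _ => rfl, fun _ _ => rfl, ?_⟩
  · simp [shiftScheme]
  · have hsum : ∀ q : (r : Fin (R + 1)) → (shiftScheme k R enc dec hdec).Q r,
        ∑ r, (shiftScheme k R enc dec hdec).d r (q r) = R + 1 := by
      intro q
      simp [shiftScheme]
    unfold PIRScheme.downloadComplexity
    simp only [hsum]
    apply Finset.sup_const
    obtain ⟨q, hq⟩ := ((shiftScheme k R enc dec hdec).D ⟨0, hk⟩).support_nonempty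
    exact ⟨q, by simpa using ⟨_, hq⟩⟩
end

section
/- Let n ≥ 2, k ≥ 1 and R ≥ 1 be integers with (n−1) dividing R. Then there exists an n-server PIR scheme for a database of k records of R bits each in which each server stores the entire kR-bit database (so the total storage is nkR bits), each query set Q_r consists of bit strings of length k·⌈log₂ n⌉ (so the upload complexity is n·k·⌈log₂ n⌉), and each server responds with exactly R/(n−1) bits to every query (so the download complexity is (n/(n−1))·R). -/
open scoped ENNReal

namespace PIRThree

/-- Bits as elements of the field with two elements. -/
def bit : Bool ≃ ZMod 2 := finTwoEquiv.symm

/-- Block `i` of a record, where block `0` is the zero block. -/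
def val {m b : ℕ} (Z : Fin (m * b) → Bool) (i : Fin (m + 1)) (t : Fin b) : ZMod 2 :=
  if h : i = 0 then 0 else bit (Z (finProdFinEquiv (i.pred h, t)))

/-- The response to a query `v`. -/
def answer {m b k : ℕ} (v : Fin k → Fin (m + 1)) (X : Fin k → Fin (m * b) → Bool) :
    Fin b → Bool :=
  fun t => bit.symm (∑ j, val (X j) (v j) t)

theorem answer_inj {m b k : ℕ} (X Y : Fin k → Fin (m * b) → Bool) (l : Fin k)
    (a : Fin k → Fin (m + 1))
    (h : ∀ r : Fin (m + 1), answer (a + Pi.single l r) X = answer (a + Pi.single l r) Y) :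
    X l = Y l := by
  have key : ∀ (Z : Fin k → Fin (m * b) → Bool) (i : Fin (m + 1)) (t : Fin b),
      ∑ j, val (Z j) ((a + Pi.single l (i - a l) : Fin k → Fin (m + 1)) j) t
        = val (Z l) i t + ∑ j ∈ Finset.univ.erase l, val (Z j) (a j) t := by
    intro Z i t
    rw [← Finset.add_sum_erase _ _ (Finset.mem_univ l)]
    congr 1
    · simp
    · refine Finset.sum_congr rfl fun j hj => ?_
      have : j ≠ l := Finset.ne_of_mem_erase hj
      simp [this]
  have h2 : ∀ (i : Fin (m + 1)) (t : Fin b),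
      val (X l) i t + ∑ j ∈ Finset.univ.erase l, val (X j) (a j) t
      = val (Y l) i t + ∑ j ∈ Finset.univ.erase l, val (Y j) (a j) t := by
    intro i t
    rw [← key, ← key]
    exact bit.symm.injective (congrFun (h (i - a l)) t)
  funext x
  obtain ⟨⟨i, t⟩, rfl⟩ := finProdFinEquiv.surjective x
  have h0 := h2 0 t
  have h1 := h2 i.succ t
  simp only [val, dite_true, zero_add] at h0
  rw [show (∑ j ∈ Finset.univ.erase l, val (X j) (a j) t)
    = ∑ j ∈ Finset.univ.erase l, val (Y j) (a j) t from by simpa [val] using h0] at h1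
  have h3 := add_right_cancel h1
  simpa [val, Fin.succ_ne_zero] using h3

theorem map_uniform {α : Type*} [Fintype α] [Nonempty α] (e : α ≃ α) :
    (PMF.uniformOfFintype α).map e = PMF.uniformOfFintype α := by
  classical
  ext x
  rw [PMF.map_apply, tsum_eq_single (e.symm x)]
  · simp
  · intro y hy
    rw [if_neg]
    rintro rfl
    simp at hy

theorem exists_enc (n k : ℕ) :
    ∃ f : (Fin k → Fin n) → (Fin (k * Nat.clog 2 n) → Bool), Function.Injective f := by
  have : Fintype.card (Fin k → Fin n) ≤ Fintype.card (Fin (k * Nat.clog 2 n) → Bool) := by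
    simp only [Fintype.card_fun, Fintype.card_fin, Fintype.card_bool]
    rw [mul_comm, pow_mul]
    exact Nat.pow_le_pow_left (Nat.le_pow_clog (by norm_num) n) k
  obtain ⟨f⟩ := Function.Embedding.nonempty_of_card_le this
  exact ⟨f, f.injective⟩

/-- Flattening of the database. -/
def flat (k R : ℕ) : (Fin k → Fin R → Bool) ≃ (Fin (k * R) → Bool) :=
  (Equiv.curry _ _ _).symm.trans (Equiv.arrowCongr finProdFinEquiv (Equiv.refl _))

open Classical in
/-- The scheme. -/
noncomputable def scheme (m b k : ℕ) : PIRScheme (m + 1) k (m * b) where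
  Q := fun _ => Fin (k * Nat.clog 2 (m + 1)) → Bool
  fintypeQ := fun _ => inferInstance
  s := fun _ => k * (m * b)
  E := fun _ => flat k (m * b)
  D := fun l => (PMF.uniformOfFintype (Fin k → Fin (m + 1))).map
    (fun a r => (exists_enc (m + 1) k).choose (a + Pi.single l r))
  d := fun _ _ => b
  resp := fun _ q X => answer (Function.invFun (exists_enc (m + 1) k).choose q)
    ((flat k (m * b)).symm X)
  recon := fun l q c =>
    if h : ∃ X : Fin k → Fin (m * b) → Bool,
      ∀ r, answer (Function.invFun (exists_enc (m + 1) k).choose (q r)) X = c r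
    then h.choose l else fun _ => false
  correct := by
    intro X l q hq
    have h : ∃ Y : Fin k → Fin (m * b) → Bool,
        ∀ r, answer (Function.invFun (exists_enc (m + 1) k).choose (q r)) Y =
          answer (Function.invFun (exists_enc (m + 1) k).choose (q r))
            ((flat k (m * b)).symm (flat k (m * b) X)) := ⟨X, by simp⟩
    rw [dif_pos h]
    obtain ⟨a, -, rfl⟩ := (PMF.mem_support_map_iff _ _ _).1 hq
    have hs := h.choose_spec
    refine answer_inj _ _ l a fun r => ?_
    have := hs r
    simpa only [Function.leftInverse_invFun (exists_enc (m + 1) k).choose_spec _,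
      Equiv.symm_apply_apply] using this
  privacy := by
    have key : ∀ (r : Fin (m + 1)) (l : Fin k),
        ((PMF.uniformOfFintype (Fin k → Fin (m + 1))).map
          (fun a (r : Fin (m + 1)) =>
            (exists_enc (m + 1) k).choose (a + Pi.single l r))).map (fun q => q r)
        = (PMF.uniformOfFintype (Fin k → Fin (m + 1))).map (exists_enc (m + 1) k).choose := by
      intro r l
      conv_rhs => rw [← map_uniform (Equiv.addRight (Pi.single l r : Fin k → Fin (m + 1)))]
      rw [PMF.map_comp, PMF.map_comp]
      rfl
    intro r l l'
    rw [key, key]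

theorem download {n k R c : ℕ} (S : PIRScheme n k R) (hk : 1 ≤ k)
    (h : ∀ r q, S.d r q = c) : S.downloadComplexity = n * c := by
  classical
  unfold PIRScheme.downloadComplexity
  simp only [h, Finset.sum_const, Finset.card_univ, Fintype.card_fin, smul_eq_mul]
  apply Finset.sup_const
  obtain ⟨q, hq⟩ := (S.D ⟨0, hk⟩).support_nonempty
  exact ⟨q, by simpa using ⟨_, hq⟩⟩

end PIRThree

/-- Construction 3 / Theorem 8 of the paper. For `n ≥ 2` with
`(n-1) ∣ R` there is an `n`-server PIR scheme for `k` records of `R` bits each in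
which every server stores the whole `kR`-bit database (total storage `nkR`), every
query is a bit string of length `k⌈log₂ n⌉` (upload complexity `nk⌈log₂ n⌉`), and
every server responds with exactly `R/(n-1)` bits to every query (download
complexity `(n/(n-1))·R`). -/
theorem construction_three (n k R : ℕ) (hn : 2 ≤ n) (hk : 1 ≤ k) (hR : 1 ≤ R)
    (hdvd : (n - 1) ∣ R) :
    ∃ S : PIRScheme n k R,
      (∀ r, S.s r = k * R) ∧
      (∑ r, S.s r = n * (k * R)) ∧
      (∀ r, S.Q r = (Fin (k * Nat.clog 2 n) → Bool)) ∧
      (∀ r q, S.d r q = R / (n - 1)) ∧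
      S.downloadComplexity = n * (R / (n - 1)) := by
  obtain ⟨m, rfl⟩ : ∃ m, n = m + 1 := ⟨n - 1, by omega⟩
  obtain ⟨b, rfl⟩ := hdvd
  have hb : (m + 1 - 1) * b / (m + 1 - 1) = b := Nat.mul_div_cancel_left b (by omega)
  rw [hb]
  refine ⟨PIRThree.scheme m b k, fun _ => rfl, ?_, fun _ => rfl, fun _ _ => rfl,
    PIRThree.download _ hk fun _ _ => rfl⟩
  simp [PIRThree.scheme]
end

section
/- Let k ≥ 1, R ≥ 1, s ≥ 1 and t ≥ 2 be integers with s dividing R and (t−1) dividing s, and set n = t·(R/s). Then there exists an n-server PIR scheme for a database of k records of R bits each in which each server stores exactly ks bits (so the total storage is n·ks = tkR bits), each query set Q_r consists of bit strings of length k·⌈log₂ t⌉ (so the upload complexity is n·k·⌈log₂ t⌉), and each server responds with exactly s/(t−1) bits to every query (so the download complexity is (t/(t−1))·R). -/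
open scoped ENNReal

namespace PirAux

/-- Bits as elements of `ZMod 2`. -/
def toZ (b : Bool) : ZMod 2 := if b then 1 else 0

/-- Elements of `ZMod 2` as bits. -/
def ofZ (z : ZMod 2) : Bool := decide (z = 1)

theorem ofZ_toZ (b : Bool) : ofZ (toZ b) = b := by
  cases b <;> decide

theorem toZ_ofZ (z : ZMod 2) : toZ (ofZ z) = z := by
  revert z; decide

/-- The block of a record named by an optional index; the missing index names the zero block. -/
def blk {α : Type} (Y : α → Bool) : Option α → ZMod 2
  | none => 0
  | some m => toZ (Y m)

theorem map_uniform_equiv {α : Type} [Fintype α] [Nonempty α] (e : α ≃ α) :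
    (PMF.uniformOfFintype α).map e = PMF.uniformOfFintype α := by
  classical
  ext x
  rw [PMF.map_apply, tsum_eq_single (e.symm x)]
  · simp
  · intro y hy
    rw [if_neg]
    rintro rfl
    simp at hy

theorem sum_diff {k : ℕ} {T : Type} [AddCommGroup T] (F : Fin k → T → ZMod 2) (a : Fin k → T)
    (l : Fin k) (x y : T) :
    (∑ i, F i ((a + Pi.single l (x - a l) : Fin k → T) i)) - (∑ i, F i ((a + Pi.single l (y - a l) : Fin k → T) i))
      = F l x - F l y := by
  rw [← Finset.sum_sub_distrib, Finset.sum_eq_single l]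
  · simp
  · intro i _ hi
    simp [hi]
  · simp

/-- The scheme, relative to chosen identifications of the index sets. -/
noncomputable def scheme {n k R w L b u m : ℕ} {T : Type} [AddCommGroup T] [Fintype T]
    (e : Fin n ≃ Fin m × T) (ρ : Fin R ≃ Fin m × Fin u × Fin b)
    (σ : Fin w ≃ Fin k × Fin u × Fin b) (τ : T ≃ Option (Fin u))
    (φ : (Fin k → T) ↪ (Fin L → Bool)) : PIRScheme n k R where
  Q := fun _ => Fin L → Bool
  fintypeQ := fun _ => inferInstance
  s := fun _ => w
  E := fun r X p => X (σ p).1 (ρ.symm ((e r).1, (σ p).2))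
  D := fun l => (PMF.uniformOfFintype (Fin k → T)).map
    (fun a r => φ (a + Pi.single l (e r).2))
  d := fun _ _ => b
  resp := fun _ q Y c =>
    ofZ (∑ i, blk (fun m' => Y (σ.symm (i, m', c))) (τ (Function.invFun φ q i)))
  recon := fun l q c p =>
    ofZ (toZ (c (e.symm ((ρ p).1,
            τ.symm (some (ρ p).2.1) - Function.invFun φ (q (e.symm ((ρ p).1, 0))) l)) (ρ p).2.2)
      - toZ (c (e.symm ((ρ p).1,
            τ.symm none - Function.invFun φ (q (e.symm ((ρ p).1, 0))) l)) (ρ p).2.2))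
  correct := by
    intro X l q hq
    rw [PMF.support_map] at hq
    obtain ⟨a, -, rfl⟩ := hq
    funext p
    have hinv : ∀ v, Function.invFun φ (φ v) = v := Function.leftInverse_invFun φ.injective
    simp only [hinv, toZ_ofZ, Equiv.apply_symm_apply, Pi.single_zero, add_zero]
    rw [sum_diff (fun i z => blk (fun m' => X i (ρ.symm ((ρ p).1, m', (ρ p).2.2))) (τ z))]
    simp [blk, ofZ_toZ]
  privacy := by
    have key : ∀ (r : Fin n) (l : Fin k), ((PMF.uniformOfFintype (Fin k → T)).map
        (fun a r => φ (a + Pi.single l (e r).2))).map (fun q : Fin n → Fin L → Bool => q r)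
        = (PMF.uniformOfFintype (Fin k → T)).map φ := by
      intro r l
      rw [PMF.map_comp]
      conv_rhs => rw [← map_uniform_equiv (Equiv.addRight (Pi.single l (e r).2)), PMF.map_comp]
      rfl
    intro r l l'
    rw [key, key]

end PirAux

/-- Construction 4 / Theorem 9 of the paper. For `s ∣ R` and
`(t-1) ∣ s` with `t ≥ 2`, setting `n = t·(R/s)`, there is an `n`-server PIR scheme
for `k` records of `R` bits each in which every server stores exactly `ks` bits
(total storage `nks = tkR`), every query is a bit string of length `k⌈log₂ t⌉`
(upload complexity `nk⌈log₂ t⌉`), and every server responds with exactly `s/(t-1)`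
bits to every query (download complexity `(t/(t-1))·R`). -/
theorem construction_four (k R s t : ℕ) (hk : 1 ≤ k) (hR : 1 ≤ R) (hs : 1 ≤ s)
    (ht : 2 ≤ t) (hsR : s ∣ R) (hts : (t - 1) ∣ s) :
    ∃ S : PIRScheme (t * (R / s)) k R,
      (∀ r, S.s r = k * s) ∧
      (∑ r, S.s r = t * (k * R)) ∧
      (∀ r, S.Q r = (Fin (k * Nat.clog 2 t) → Bool)) ∧
      (∀ r q, S.d r q = s / (t - 1)) ∧
      S.downloadComplexity = t * (R / s) * (s / (t - 1)) := by
  obtain ⟨u, rfl⟩ : ∃ u, t = u + 1 := ⟨t - 1, by omega⟩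
  simp only [Nat.add_sub_cancel] at hts ⊢
  obtain ⟨b, rfl⟩ := hts
  obtain ⟨m, rfl⟩ := hsR
  have hu : 0 < u := by omega
  rw [Nat.mul_div_cancel_left m hs, Nat.mul_div_cancel_left b hu]
  have e : Fin ((u + 1) * m) ≃ Fin m × ZMod (u + 1) := Fintype.equivOfCardEq (by
    simp only [Fintype.card_fin, Fintype.card_prod, ZMod.card]; ring)
  have ρ : Fin (u * b * m) ≃ Fin m × Fin u × Fin b := Fintype.equivOfCardEq (by
    simp only [Fintype.card_fin, Fintype.card_prod]; ring)
  have σ : Fin (k * (u * b)) ≃ Fin k × Fin u × Fin b := Fintype.equivOfCardEq (by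
    simp only [Fintype.card_fin, Fintype.card_prod])
  have τ : ZMod (u + 1) ≃ Option (Fin u) := Fintype.equivOfCardEq (by
    simp only [Fintype.card_fin, Fintype.card_option, ZMod.card])
  obtain ⟨φ⟩ : Nonempty ((Fin k → ZMod (u + 1)) ↪ (Fin (k * Nat.clog 2 (u + 1)) → Bool)) := by
    apply Function.Embedding.nonempty_of_card_le
    simp only [Fintype.card_fun, ZMod.card, Fintype.card_fin, Fintype.card_bool]
    rw [mul_comm k, pow_mul]
    exact Nat.pow_le_pow_left (Nat.le_pow_clog (by norm_num) _) k
  refine ⟨PirAux.scheme e ρ σ τ φ, fun _ => rfl, ?_, fun _ => rfl, fun _ _ => rfl, ?_⟩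
  · simp only [PirAux.scheme, Finset.sum_const, Finset.card_univ, Fintype.card_fin, smul_eq_mul]
    ring
  · obtain ⟨q, hq⟩ := ((PirAux.scheme e ρ σ τ φ).D ⟨0, hk⟩).support_nonempty
    have hsum : ∀ q' : (r : Fin ((u + 1) * m)) → (PirAux.scheme e ρ σ τ φ).Q r,
         ∑ r, (PirAux.scheme e ρ σ τ φ).d r (q' r) = (u + 1) * m * b := by
      intro q'
      simp [PirAux.scheme]
    unfold PIRScheme.downloadComplexity
    simp only [hsum]
    apply Finset.sup_const
    exact ⟨q, by simpa using ⟨⟨0, hk⟩, hq⟩⟩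
end

section
/- Let n ≥ 2, k ≥ 1 and R ≥ 1 be integers with n^k dividing R. Then there exists an n-server PIR scheme for a database of k records of R bits each in which each server stores the entire kR-bit database (so the total storage is nkR bits), each query set Q_r consists of bit strings of length k²·n^{k−1}·⌈log₂ n⌉ (so the upload complexity is k²·n^k·⌈log₂ n⌉), and each server responds with exactly ((n^k−1)/(n−1))·(R/n^k) bits to every query, so that the download complexity is (1 − 1/n^k)·(n/(n−1))·R = n·((n^k−1)/(n−1))·(R/n^k). -/
open scoped ENNReal

namespace SJ

/-- number of sums of each type of a given cardinality -/
def c (n : ℕ) : ℕ → ℕ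
  | 0 => 0
  | m + 1 => (n - 1) ^ m

theorem sum_c {n k : ℕ} (hn : 2 ≤ n) (U : Finset (Fin k)) :
    (n - 1) * (∑ S ∈ U.powerset, c n S.card) + 1 = n ^ U.card := by
  have h := Finset.sum_pow_mul_eq_add_pow (n - 1) 1 U
  rw [show n - 1 + 1 = n by omega] at h
  rw [← h, Finset.mul_sum]
  rw [← Finset.add_sum_erase _ _ (Finset.empty_mem_powerset U),
    ← Finset.add_sum_erase _ (fun t => (n - 1) ^ t.card * 1 ^ (U.card - t.card))
      (Finset.empty_mem_powerset U)]
  simp only [Finset.card_empty, c, mul_zero, zero_add, pow_zero, one_pow, mul_one]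
  rw [add_comm]
  congr 1
  apply Finset.sum_congr rfl
  intro S hS
  have : S.Nonempty := Finset.nonempty_iff_ne_empty.2 (Finset.ne_of_mem_erase hS)
  obtain ⟨m, hm⟩ := Nat.exists_eq_succ_of_ne_zero this.card_pos.ne'
  rw [hm]
  simp [c, pow_succ, mul_comm]

/-- slots of each server's answer -/
abbrev A (n k : ℕ) : Type := Σ S : Finset (Fin k), Fin (c n S.card)

theorem card_A {n k : ℕ} (hn : 2 ≤ n) : Fintype.card (A n k) = (n ^ k - 1) / (n - 1) := by
  have h := sum_c hn (Finset.univ : Finset (Fin k))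
  simp only [Finset.powerset_univ, Finset.card_univ, Fintype.card_fin] at h
  simp only [A, Fintype.card_sigma, Fintype.card_fin]
  rw [← h, Nat.add_sub_cancel, Nat.mul_div_cancel_left _ (by omega)]

abbrev P (n k : ℕ) (j : Fin k) : Type := {a : A n k // j ∈ a.1}

theorem card_P {n k : ℕ} (hn : 2 ≤ n) (j : Fin k) :
    Fintype.card (P n k j) = n ^ (k - 1) := by
  have h1 := sum_c hn (Finset.univ : Finset (Fin k))
  have h2 := sum_c hn ((Finset.univ : Finset (Fin k)).erase j)
  have hk : 0 < k := j.pos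
  rw [Finset.card_erase_of_mem (Finset.mem_univ j)] at h2
  simp only [Finset.card_univ, Fintype.card_fin, Finset.powerset_univ] at h1 h2
  have h3 : ((Finset.univ : Finset (Fin k)).erase j).powerset
      = Finset.univ.filter (fun S => j ∉ S) := by
    ext S
    simp [Finset.subset_erase]
  rw [h3] at h2
  have h4 : Fintype.card (P n k j)
      = ∑ S ∈ Finset.univ.filter (fun S : Finset (Fin k) => j ∈ S), c n S.card := by
    rw [Fintype.card_subtype, Finset.card_filter, Fintype.sum_sigma, Finset.sum_filter]
    apply Finset.sum_congr rfl
    intro S _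
    by_cases h : j ∈ S <;> simp [h]
  have h5 := Finset.sum_filter_add_sum_filter_not (Finset.univ : Finset (Finset (Fin k)))
    (fun S => j ∈ S) (fun S => c n S.card)
  rw [← h5, ← h4] at h1
  obtain ⟨m, rfl⟩ : ∃ m, n = m + 1 := ⟨n - 1, by omega⟩
  obtain ⟨l, rfl⟩ : ∃ l, k = l + 1 := ⟨k - 1, by omega⟩
  simp only [Nat.add_sub_cancel] at *
  rw [pow_succ, ← h2] at h1
  have hm : 0 < m := by omega
  rw [← h2]
  apply Nat.eq_of_mul_eq_mul_left hm
  linarith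

abbrev I (n k : ℕ) (j : Fin k) : Type := Fin n × P n k j

theorem card_I {n k : ℕ} (hn : 2 ≤ n) (j : Fin k) : Fintype.card (I n k j) = n ^ k := by
  have hk : 0 < k := j.pos
  rw [Fintype.card_prod, card_P hn, Fintype.card_fin, ← pow_succ']
  congr 1; omega

/-- server queries -/
abbrev T (n k : ℕ) : Type := (j : Fin k) → P n k j → I n k j

theorem card_T {n k : ℕ} (hn : 2 ≤ n) :
    Fintype.card (T n k) ≤ Fintype.card (Fin (k ^ 2 * n ^ (k - 1) * Nat.clog 2 n) → Bool) := by
  have h : Fintype.card (T n k) = ((n ^ k) ^ (n ^ (k - 1))) ^ k := by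
    rw [Fintype.card_pi]
    simp [card_P hn, card_I hn, -Fintype.card_prod]
  rw [h, Fintype.card_fun, Fintype.card_bool, Fintype.card_fin, ← pow_mul, ← pow_mul]
  calc n ^ (k * (n ^ (k - 1) * k)) ≤ (2 ^ Nat.clog 2 n) ^ (k * (n ^ (k - 1) * k)) :=
        Nat.pow_le_pow_left (Nat.le_pow_clog (by norm_num) n) _
    _ = 2 ^ (k ^ 2 * n ^ (k - 1) * Nat.clog 2 n) := by
        rw [← pow_mul]
        congr 1
        ring

theorem exists_phi {n k : ℕ} (hn : 2 ≤ n) (ℓ : Fin k) (r : Fin n) (S : Finset (Fin k))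
    (h : ℓ ∈ S) (h' : (S.erase ℓ).Nonempty) :
    Nonempty (Fin (c n S.card) ↪ {r' : Fin n // r' ≠ r} × Fin (c n (S.erase ℓ).card)) := by
  apply Function.Embedding.nonempty_of_card_le
  obtain ⟨m, hm⟩ := Nat.exists_eq_succ_of_ne_zero h'.card_pos.ne'
  have : S.card = m + 2 := by rw [← Finset.card_erase_add_one h, hm]
  rw [this, hm, Fintype.card_prod, Fintype.card_subtype_compl, Fintype.card_fin,
    Fintype.card_fin, Fintype.card_fin]
  simp [c, pow_succ, mul_comm]

/-- side-information location -/
theorem exists_label {n k : ℕ} (hn : 2 ≤ n) (ℓ : Fin k) (r : Fin n) :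
    ∃ φ : (a : A n k) → Fin n × A n k,
      (∀ a, (a.1.erase ℓ).Nonempty → (φ a).2.1 = a.1.erase ℓ) ∧
      (∀ a, ℓ ∉ a.1 → φ a = (r, a)) ∧
      (∀ a b, (a.1.erase ℓ).Nonempty → (b.1.erase ℓ).Nonempty → φ a = φ b → a = b) := by
  classical
  have g := fun (S : Finset (Fin k)) (h : ℓ ∈ S) (h' : (S.erase ℓ).Nonempty) =>
    Classical.choice (exists_phi hn ℓ r S h h')
  refine ⟨fun a => if h : ℓ ∈ a.1 ∧ (a.1.erase ℓ).Nonempty then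
    ((g a.1 h.1 h.2 a.2).1.1, ⟨a.1.erase ℓ, (g a.1 h.1 h.2 a.2).2⟩) else (r, a), ?_, ?_, ?_⟩
  · intro a ha
    by_cases h : ℓ ∈ a.1
    · simp [h, ha]
    · simp [h]
  · intro a ha
    simp [ha]
  · rintro ⟨S, i⟩ ⟨S', i'⟩ ha hb hab
    by_cases h : ℓ ∈ S <;> by_cases h' : ℓ ∈ S'
    · simp only at ha hb
      simp only [h, h', ha, hb, and_self, dif_pos, Prod.mk.injEq] at hab
      have e : S.erase ℓ = S'.erase ℓ := congrArg Sigma.fst hab.2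
      have e' : S = S' := by rw [← Finset.insert_erase h, e, Finset.insert_erase h']
      subst e'
      have h2 := hab.2
      simp only [Sigma.mk.injEq, heq_eq_eq, true_and] at h2
      have := (g S h ha).injective (Prod.ext (Subtype.ext hab.1) h2)
      rw [this]
    · simp only at ha hb
      simp only [h, h', ha, and_self, dif_pos, false_and, dif_neg, not_false_eq_true,
        Prod.mk.injEq] at hab
      exact absurd hab.1 (g S h ha i).1.2
    · simp only at ha hb
      simp only [h, h', hb, and_self, dif_pos, false_and, dif_neg, not_false_eq_true,
        Prod.mk.injEq] at hab
      exact absurd hab.1.symm (g S' h' hb i').1.2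
    · simpa [h, h'] using hab

/-- the index assignments -/
theorem exists_f {n k : ℕ} (hn : 2 ≤ n) (ℓ : Fin k) :
    ∃ f : Fin n → T n k,
      (∀ r j, Function.Injective (f r j)) ∧
      (∀ r p, f r ℓ p = (r, p)) ∧
      (∀ r (a : A n k), (a.1.erase ℓ).Nonempty → ∃ r' : Fin n, ∃ a' : A n k,
        a'.1 = a.1.erase ℓ ∧ ∀ j (h : j ∈ a.1) (h' : j ∈ a'.1),
          f r j ⟨a, h⟩ = f r' j ⟨a', h'⟩) := by
  classical
  choose φ h1 h2 h3 using fun r => exists_label hn ℓ r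
  have hne : ∀ {j} {a : A n k}, j ≠ ℓ → j ∈ a.1 → j ∈ a.1.erase ℓ := fun h h' =>
    Finset.mem_erase.2 ⟨h, h'⟩
  refine ⟨fun r j p => if h : j = ℓ then (r, p) else
    ((φ r p.1).1, ⟨(φ r p.1).2, by rw [h1 r p.1 ⟨j, hne h p.2⟩]; exact hne h p.2⟩), ?_, ?_, ?_⟩
  · intro r j p q hpq
    by_cases h : j = ℓ
    · simpa [h] using hpq
    · simp only [h, dif_neg, not_false_eq_true, Prod.mk.injEq, Subtype.mk.injEq] at hpq
      exact Subtype.ext (h3 r _ _ ⟨j, hne h p.2⟩ ⟨j, hne h q.2⟩ (Prod.ext hpq.1 hpq.2))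
  · intro r p
    simp
  · intro r a ha
    refine ⟨(φ r a).1, (φ r a).2, h1 r a ha, fun j h h' => ?_⟩
    rw [h1 r a ha] at h'
    have hj := Finset.ne_of_mem_erase h'
    have e := h2 (φ r a).1 (φ r a).2 (by rw [h1 r a ha]; simp)
    simp only [hj, dif_neg, not_false_eq_true, e]

/-- the answer of a server -/
def ans {n k m : ℕ} (t : T n k) (X : (j : Fin k) → I n k j × Fin m → Bool)
    (s : A n k × Fin m) : ZMod 2 :=
  ∑ j, if h : j ∈ s.1.1 then (if X j (t j ⟨s.1, h⟩, s.2) then 1 else 0) else 0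

theorem determined {n k m : ℕ} (ℓ : Fin k) (f : Fin n → T n k)
    (h2 : ∀ r p, f r ℓ p = (r, p))
    (h3 : ∀ r (a : A n k), (a.1.erase ℓ).Nonempty → ∃ r' : Fin n, ∃ a' : A n k,
        a'.1 = a.1.erase ℓ ∧ ∀ j (h : j ∈ a.1) (h' : j ∈ a'.1),
          f r j ⟨a, h⟩ = f r' j ⟨a', h'⟩)
    (π : (j : Fin k) → Equiv.Perm (I n k j))
    (X X' : (j : Fin k) → I n k j × Fin m → Bool)
    (hX : ∀ r s, ans (fun j p => π j (f r j p)) X s = ans (fun j p => π j (f r j p)) X' s) :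
    X ℓ = X' ℓ := by
  classical
  funext ⟨i, x⟩
  obtain ⟨⟨r, a, ha⟩, rfl⟩ := (π ℓ).surjective i
  have key : ∀ Y : (j : Fin k) → I n k j × Fin m → Bool,
      ans (fun j p => π j (f r j p)) Y (a, x) = (if Y ℓ (π ℓ (r, ⟨a, ha⟩), x) then 1 else 0) +
        ∑ j ∈ Finset.univ.erase ℓ, if h : j ∈ a.1 then
          (if Y j (π j (f r j ⟨a, h⟩), x) then 1 else 0) else 0 := by
    intro Y
    unfold ans
    rw [← Finset.add_sum_erase _ _ (Finset.mem_univ ℓ)]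
    simp [ha, h2]
  have rest : (∑ j ∈ Finset.univ.erase ℓ, if h : j ∈ a.1 then
          (if X j (π j (f r j ⟨a, h⟩), x) then (1 : ZMod 2) else 0) else 0) =
      ∑ j ∈ Finset.univ.erase ℓ, if h : j ∈ a.1 then
          (if X' j (π j (f r j ⟨a, h⟩), x) then 1 else 0) else 0 := by
    by_cases hne : (a.1.erase ℓ).Nonempty
    · obtain ⟨r', a', e, hf⟩ := h3 r a hne
      have key2 : ∀ Y : (j : Fin k) → I n k j × Fin m → Bool,
          ans (fun j p => π j (f r' j p)) Y (a', x) =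
          ∑ j ∈ Finset.univ.erase ℓ, if h : j ∈ a.1 then
            (if Y j (π j (f r j ⟨a, h⟩), x) then 1 else 0) else 0 := by
        intro Y
        unfold ans
        rw [← Finset.add_sum_erase _ _ (Finset.mem_univ ℓ), dif_neg (by simp [e]), zero_add]
        apply Finset.sum_congr rfl
        intro j hj
        have hj' := Finset.ne_of_mem_erase hj
        by_cases h : j ∈ a.1
        · have h' : j ∈ a'.1 := by rw [e]; exact Finset.mem_erase.2 ⟨hj', h⟩
          simp only [h, h', dif_pos, hf j h h']
        · have h' : j ∉ a'.1 := by rw [e]; exact fun q => h (Finset.mem_of_mem_erase q)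
          simp only [h, h', dif_neg, not_false_eq_true]
      rw [← key2, ← key2, hX]
    · apply Finset.sum_congr rfl
      intro j hj
      have h : j ∉ a.1 := fun h => hne ⟨j, Finset.mem_erase.2 ⟨Finset.ne_of_mem_erase hj, h⟩⟩
      simp only [h, dif_neg, not_false_eq_true]
  have := hX r (a, x)
  rw [key, key, rest] at this
  have := add_right_cancel this
  cases h : X ℓ (π ℓ (r, ⟨a, ha⟩), x) <;> cases h' : X' ℓ (π ℓ (r, ⟨a, ha⟩), x) <;>
    simp [h, h'] at this ⊢

theorem exists_perm {α β : Type} [Finite β] (f g : α → β) (hf : Function.Injective f)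
    (hg : Function.Injective g) : ∃ σ : Equiv.Perm β, ∀ a, σ (f a) = g a := by
  classical
  have := Fintype.ofFinite β
  let e : {x // x ∈ Set.range f} ≃ {x // x ∈ Set.range g} :=
    (Equiv.ofInjective f hf).symm.trans (Equiv.ofInjective g hg)
  refine ⟨e.extendSubtype, fun a => ?_⟩
  rw [Equiv.extendSubtype_apply_of_mem e _ ⟨a, rfl⟩]
  have : (Equiv.ofInjective f hf).symm ⟨f a, ⟨a, rfl⟩⟩ = a :=
    Equiv.ofInjective_symm_apply hf a
  simp [e]

theorem map_uniform {α : Type} [Fintype α] [Nonempty α] (e : α ≃ α) :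
    (PMF.uniformOfFintype α).map e = PMF.uniformOfFintype α := by
  classical
  ext b
  rw [PMF.map_apply, tsum_eq_single (e.symm b)]
  · simp
  · intro a ha
    rw [if_neg]
    rintro rfl
    simp at ha

end SJ

/-- Construction 5 / Theorem 10 of the paper. For `n ≥ 2` with
`n^k ∣ R` there is an `n`-server PIR scheme for `k` records of `R` bits each in
which every server stores the whole `kR`-bit database (total storage `nkR`), every
query is a bit string of length `k²·n^(k-1)·⌈log₂ n⌉` (upload complexity
`k²·n^k·⌈log₂ n⌉`), and every server responds with exactly
`((n^k - 1)/(n-1))·(R/n^k)` bits to every query, so the download complexity is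
`(1 - 1/n^k)·(n/(n-1))·R = n·((n^k - 1)/(n-1))·(R/n^k)`. -/
theorem construction_five (n k R : ℕ) (hn : 2 ≤ n) (hk : 1 ≤ k) (hR : 1 ≤ R)
    (hdvd : n ^ k ∣ R) :
    ∃ S : PIRScheme n k R,
      (∀ r, S.s r = k * R) ∧
      (∑ r, S.s r = n * (k * R)) ∧
      (∀ r, S.Q r = (Fin (k ^ 2 * n ^ (k - 1) * Nat.clog 2 n) → Bool)) ∧
      (∀ r q, S.d r q = (n ^ k - 1) / (n - 1) * (R / n ^ k)) ∧
      S.downloadComplexity = n * ((n ^ k - 1) / (n - 1) * (R / n ^ k)) := by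
  classical
  obtain ⟨m, rfl⟩ := hdvd
  have hm : n ^ k * m / n ^ k = m := Nat.mul_div_cancel_left _ (by positivity)
  rw [hm]
  generalize hR' : n ^ k * m = R
  choose f f1 f2 f3 using fun ℓ : Fin k => SJ.exists_f hn ℓ
  obtain ⟨enc⟩ := Function.Embedding.nonempty_of_card_le (SJ.card_T (k := k) hn)
  have hT : Nonempty (SJ.T n k) := ⟨f ⟨0, hk⟩ ⟨0, by omega⟩⟩
  have hdec : ∀ t, Function.invFun enc (enc t) = t := Function.leftInverse_invFun enc.injective
  generalize hdecd : Function.invFun enc = dec at hdec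
  have eR : ∀ j : Fin k, SJ.I n k j × Fin m ≃ Fin R := fun j =>
    Fintype.equivFinOfCardEq (by
      rw [Fintype.card_prod, SJ.card_I hn, Fintype.card_fin, hR'])
  have eA : SJ.A n k × Fin m ≃ Fin ((n ^ k - 1) / (n - 1) * m) :=
    Fintype.equivFinOfCardEq (by rw [Fintype.card_prod, SJ.card_A hn, Fintype.card_fin])
  let E : (Fin k → Fin R → Bool) → (Fin (k * R) → Bool) := fun X i =>
    X (finProdFinEquiv.symm i).1 (finProdFinEquiv.symm i).2
  let resp : SJ.T n k → (Fin (k * R) → Bool) → (Fin ((n ^ k - 1) / (n - 1) * m) → Bool) :=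
    fun t Z s => decide (SJ.ans t (fun j i => Z (finProdFinEquiv (j, eR j i))) (eA.symm s) = 1)
  let G : Fin k → ((j : Fin k) → Equiv.Perm (SJ.I n k j)) →
      (Fin n → (Fin (k ^ 2 * n ^ (k - 1) * Nat.clog 2 n) → Bool)) :=
    fun ℓ π r => enc (fun j p => π j (f ℓ r j p))
  have det : ∀ ℓ π X X', (∀ r, resp (dec (G ℓ π r)) (E X) = resp (dec (G ℓ π r)) (E X')) →
      X ℓ = X' ℓ := by
    intro ℓ π X X' h
    have h0 := SJ.determined (m := m) ℓ (f ℓ) (f2 ℓ) (f3 ℓ) π (fun j i => X j (eR j i))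
      (fun j i => X' j (eR j i)) (by
        intro r s
        have h1 := congrFun (h r) (eA s)
        simp only [resp, G, hdec, E, Equiv.symm_apply_apply, decide_eq_decide] at h1
        have z : ∀ a b : ZMod 2, (a = 1 ↔ b = 1) → a = b := by decide
        exact z _ _ h1)
    funext i
    simpa using congrFun h0 ((eR ℓ).symm i)
  let S : PIRScheme n k R :=
    { Q := fun _ => (Fin (k ^ 2 * n ^ (k - 1) * Nat.clog 2 n) → Bool)
      fintypeQ := fun _ => inferInstance
      s := fun _ => k * R
      E := fun _ => E
      D := fun ℓ => (PMF.uniformOfFintype ((j : Fin k) → Equiv.Perm (SJ.I n k j))).map (G ℓ)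
      d := fun _ _ => (n ^ k - 1) / (n - 1) * m
      resp := fun _ q => resp (dec q)
      recon := fun ℓ q c => if h : ∃ X, (fun r => resp (dec (q r)) (E X)) = c
        then h.choose ℓ else fun _ => false
      correct := by
        intro X ℓ q hq
        rw [PMF.mem_support_map_iff] at hq
        obtain ⟨π, -, rfl⟩ := hq
        have hex : ∃ X', (fun r => resp (dec (G ℓ π r)) (E X'))
          = (fun r => resp (dec (G ℓ π r)) (E X)) := ⟨X, rfl⟩
        rw [dif_pos hex]
        exact det ℓ π _ _ (fun r => congrFun hex.choose_spec r)
      privacy := by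
        intro r ℓ ℓ'
        rw [PMF.map_comp, PMF.map_comp]
        choose σ hσ using fun j => SJ.exists_perm (f ℓ r j) (f ℓ' r j) (f1 ℓ r j) (f1 ℓ' r j)
        have hu := SJ.map_uniform (Equiv.mulRight (σ : (j : Fin k) → Equiv.Perm (SJ.I n k j)))
        have hc : ((fun q : Fin n → (Fin (k ^ 2 * n ^ (k - 1) * Nat.clog 2 n) → Bool) => q r) ∘ G ℓ')
            = ((fun q : Fin n → (Fin (k ^ 2 * n ^ (k - 1) * Nat.clog 2 n) → Bool) => q r) ∘ G ℓ)
              ∘ (Equiv.mulRight (σ : (j : Fin k) → Equiv.Perm (SJ.I n k j))) := by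
          funext π
          simp [G, hσ]
        conv_rhs => rw [hc, ← PMF.map_comp, hu] }
  refine ⟨S, fun _ => rfl, ?_, fun _ => rfl, fun _ _ => rfl, ?_⟩
  · simp [S]
  · unfold PIRScheme.downloadComplexity
    have : ∀ q : (r : Fin n) → S.Q r, (∑ r, S.d r (q r)) = n * ((n ^ k - 1) / (n - 1) * m) := by
      intro q; simp [S]
    simp only [this]
    apply Finset.sup_const
    obtain ⟨q, hq⟩ := (S.D ⟨0, hk⟩).support_nonempty
    exact ⟨q, by simpa using ⟨_, hq⟩⟩
end

section
/- Let n ≥ 2, k ≥ 1 and R ≥ 1 be integers with n^k·(n−1) dividing R. Then there exists an n-server PIR scheme for a database of k records of R bits each in which each server stores the entire kR-bit database (so the total storage is nkR bits), each query set Q_r consists of bit strings of length k·⌈log₂ n⌉ (so the upload complexity is n·k·⌈log₂ n⌉), and each server responds with exactly (n^k − 1)·R/(n^k·(n−1)) bits to every query, so that the download complexity is (1 − 1/n^k)·(n/(n−1))·R. -/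
open scoped ENNReal

section PIRConstruction

/-- Bits to `ZMod 2`. -/
def pirB2Z (b : Bool) : ZMod 2 := if b then 1 else 0

/-- `ZMod 2` to bits. -/
def pirZ2B (z : ZMod 2) : Bool := decide (z = 1)

theorem pirZ2B_B2Z (b : Bool) : pirZ2B (pirB2Z b) = b := by
  cases b <;> decide

theorem pirB2Z_Z2B (z : ZMod 2) : pirB2Z (pirZ2B z) = z := by
  revert z; decide

variable {n k R m L d : ℕ}

/-- The symbol of record `i` in chunk `t`, part `b` (part `0` is identically zero). -/
def pirVal (eR : Fin R ≃ ((Fin k → ZMod n) × {b : ZMod n // b ≠ 0} × Fin m))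
    (X : Fin k → Fin R → Bool) (i : Fin k) (t : Fin k → ZMod n) (b : ZMod n) (j : Fin m) :
    ZMod 2 :=
  if h : b ≠ 0 then pirB2Z (X i (eR.symm (t, ⟨b, h⟩, j))) else 0

/-- The full (un-trimmed) response to the query `v`. -/
def pirF (eR : Fin R ≃ ((Fin k → ZMod n) × {b : ZMod n // b ≠ 0} × Fin m))
    (X : Fin k → Fin R → Bool) (v u : Fin k → ZMod n) (j : Fin m) : ZMod 2 :=
  ∑ i, pirVal eR X i (u - v) (u i) j

theorem pirF_zero (eR : Fin R ≃ ((Fin k → ZMod n) × {b : ZMod n // b ≠ 0} × Fin m))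
    (X : Fin k → Fin R → Bool) (v : Fin k → ZMod n) (j : Fin m) : pirF eR X v 0 j = 0 := by
  simp [pirF, pirVal]

theorem pirF_sub (eR : Fin R ≃ ((Fin k → ZMod n) × {b : ZMod n // b ≠ 0} × Fin m))
    (X : Fin k → Fin R → Bool) (a t : Fin k → ZMod n) (l : Fin k)
    (b : {b : ZMod n // b ≠ 0}) (j : Fin m) :
    pirF eR X (a + Pi.single l (b.1 - t l - a l)) (a + Pi.single l (b.1 - t l - a l) + t) j
      - pirF eR X (a + Pi.single l (0 - t l - a l)) (a + Pi.single l (0 - t l - a l) + t) j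
      = pirB2Z (X l (eR.symm (t, b, j))) := by
  unfold pirF
  rw [← Finset.sum_sub_distrib, Finset.sum_eq_single l]
  · have h1 : a l + (b.1 - t l - a l) + t l = b.1 := by ring
    have h2 : a l + (0 - t l - a l) + t l = 0 := by ring
    simp only [add_sub_cancel_left, Pi.add_apply, Pi.single_eq_same, h1, h2]
    simp [pirVal, b.2]
  · intro i _ hi
    simp [Pi.single_eq_of_ne hi]
  · simp

/-- The response of a server, as transmitted bits. -/
def pirResp (eR : Fin R ≃ ((Fin k → ZMod n) × {b : ZMod n // b ≠ 0} × Fin m))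
    (eD : Fin d ≃ ({u : Fin k → ZMod n // u ≠ 0} × Fin m))
    (X : Fin k → Fin R → Bool) (v : Fin k → ZMod n) : Fin d → Bool :=
  fun p => pirZ2B (pirF eR X v (eD p).1.1 (eD p).2)

open Classical in
/-- Re-insert the zero response. -/
noncomputable def pirExt (eD : Fin d ≃ ({u : Fin k → ZMod n // u ≠ 0} × Fin m))
    (c : Fin d → Bool) (u : Fin k → ZMod n) (j : Fin m) : ZMod 2 :=
  if h : u ≠ 0 then pirB2Z (c (eD.symm (⟨u, h⟩, j))) else 0

theorem pirExt_resp (eR : Fin R ≃ ((Fin k → ZMod n) × {b : ZMod n // b ≠ 0} × Fin m))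
    (eD : Fin d ≃ ({u : Fin k → ZMod n // u ≠ 0} × Fin m))
    (X : Fin k → Fin R → Bool) (v u : Fin k → ZMod n) (j : Fin m) :
    pirExt eD (pirResp eR eD X v) u j = pirF eR X v u j := by
  unfold pirExt
  split_ifs with h
  · simp [pirResp, pirB2Z_Z2B]
  · have h0 : u = 0 := not_not.mp h
    rw [h0, pirF_zero]

theorem pir_uniform_map_add [NeZero n] (c : Fin k → ZMod n) :
    (PMF.uniformOfFintype (Fin k → ZMod n)).map (fun a => a + c)
      = PMF.uniformOfFintype (Fin k → ZMod n) := by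
  ext x
  rw [PMF.map_apply, tsum_eq_single (x - c)]
  · simp
  · intro y hy
    rw [if_neg]
    rintro rfl
    simp at hy

/-- The scheme. -/
noncomputable def pirScheme [NeZero n]
    (eR : Fin R ≃ ((Fin k → ZMod n) × {b : ZMod n // b ≠ 0} × Fin m))
    (eD : Fin d ≃ ({u : Fin k → ZMod n // u ≠ 0} × Fin m))
    (σ : Fin n ≃ ZMod n) (enc : (Fin k → ZMod n) ↪ (Fin L → Bool)) : PIRScheme n k R where
  Q := fun _ => Fin L → Bool
  fintypeQ := fun _ => inferInstance
  s := fun _ => k * R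
  E := fun _ X p => X (finProdFinEquiv.symm p).1 (finProdFinEquiv.symm p).2
  D := fun l => (PMF.uniformOfFintype (Fin k → ZMod n)).map
    (fun a r => enc (a + Pi.single l (σ r)))
  d := fun _ _ => d
  resp := fun _ q Y => pirResp eR eD (fun i x => Y (finProdFinEquiv (i, x)))
    (Function.invFun enc q)
  recon := fun l q c x =>
    let v : Fin n → (Fin k → ZMod n) := fun r => Function.invFun enc (q r)
    let a := v (σ.symm 0)
    let t := (eR x).1
    let b := (eR x).2.1
    let j := (eR x).2.2
    let r1 := σ.symm (b.1 - t l - a l)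
    let r0 := σ.symm (0 - t l - a l)
    pirZ2B (pirExt eD (c r1) (v r1 + t) j - pirExt eD (c r0) (v r0 + t) j)
  correct := by
    intro X l q hq
    rw [PMF.mem_support_map_iff] at hq
    obtain ⟨a, -, rfl⟩ := hq
    funext x
    have hinv : ∀ y, Function.invFun enc (enc y) = y := Function.leftInverse_invFun enc.injective
    simp only [hinv, pirExt_resp, Equiv.symm_apply_apply, Equiv.apply_symm_apply,
      Pi.single_zero, add_zero]
    rw [pirF_sub, pirZ2B_B2Z]
    simp
  privacy := by
    intro r l l'
    have key : ∀ l : Fin k, ((PMF.uniformOfFintype (Fin k → ZMod n)).map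
        (fun a r => enc (a + Pi.single l (σ r)))).map (fun q : Fin n → (Fin L → Bool) => q r)
        = (PMF.uniformOfFintype (Fin k → ZMod n)).map enc := by
      intro l
      rw [PMF.map_comp]
      conv_rhs => rw [← pir_uniform_map_add (Pi.single l (σ r)), PMF.map_comp]
      rfl
    rw [key l, key l']

end PIRConstruction

/-- Construction 6 / Theorem 11 of the paper. For `n ≥ 2` with
`n^k·(n-1) ∣ R` there is an `n`-server PIR scheme for `k` records of `R` bits each
in which every server stores the whole `kR`-bit database (total storage `nkR`),
every query is a bit string of length `k⌈log₂ n⌉` (upload complexity `nk⌈log₂ n⌉`),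
and every server responds with exactly `(n^k - 1)·R/(n^k·(n-1))` bits to every
query, so the download complexity is `(1 - 1/n^k)·(n/(n-1))·R`. -/
theorem construction_six (n k R : ℕ) (hn : 2 ≤ n) (hk : 1 ≤ k) (hR : 1 ≤ R)
    (hdvd : n ^ k * (n - 1) ∣ R) :
    ∃ S : PIRScheme n k R,
      (∀ r, S.s r = k * R) ∧
      (∑ r, S.s r = n * (k * R)) ∧
      (∀ r, S.Q r = (Fin (k * Nat.clog 2 n) → Bool)) ∧
      (∀ r q, S.d r q = (n ^ k - 1) * (R / (n ^ k * (n - 1)))) ∧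
      S.downloadComplexity = n * ((n ^ k - 1) * (R / (n ^ k * (n - 1)))) := by
  haveI : NeZero n := ⟨by omega⟩
  obtain ⟨m, hm⟩ := hdvd
  have hpos : 0 < n ^ k * (n - 1) := Nat.mul_pos (pow_pos (by omega) k) (by omega)
  have hdiv : R / (n ^ k * (n - 1)) = m := by rw [hm, Nat.mul_div_cancel_left _ hpos]
  have hT : Fintype.card (Fin k → ZMod n) = n ^ k := by simp [ZMod.card]
  have eR : Fin R ≃ ((Fin k → ZMod n) × {b : ZMod n // b ≠ 0} × Fin m) := by
    apply Fintype.equivOfCardEq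
    rw [Fintype.card_prod, Fintype.card_prod, hT, Fintype.card_subtype_compl]
    simp [ZMod.card, hm, mul_assoc]
  have eD : Fin ((n ^ k - 1) * (R / (n ^ k * (n - 1)))) ≃
      ({u : Fin k → ZMod n // u ≠ 0} × Fin m) := by
    apply Fintype.equivOfCardEq
    rw [Fintype.card_prod, Fintype.card_subtype_compl, hT, hdiv]
    simp
  have σ : Fin n ≃ ZMod n := Fintype.equivOfCardEq (by simp [ZMod.card])
  obtain ⟨enc⟩ : Nonempty ((Fin k → ZMod n) ↪ (Fin (k * Nat.clog 2 n) → Bool)) := by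
    apply Function.Embedding.nonempty_of_card_le
    rw [hT]
    simp only [Fintype.card_pi, Fintype.card_bool, Finset.prod_const, Finset.card_univ,
      Fintype.card_fin]
    rw [mul_comm, pow_mul]
    exact Nat.pow_le_pow_left (Nat.le_pow_clog (by norm_num) n) k
  refine ⟨pirScheme eR eD σ enc, fun _ => rfl, ?_, fun _ => rfl, fun _ _ => rfl, ?_⟩
  · simp [pirScheme]
  · unfold PIRScheme.downloadComplexity
    have hsum : ∀ q : (r : Fin n) → (pirScheme eR eD σ enc).Q r,
        ∑ r, (pirScheme eR eD σ enc).d r (q r)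
          = n * ((n ^ k - 1) * (R / (n ^ k * (n - 1)))) := by
      intro q
      simp [pirScheme]
    simp only [hsum]
    apply Finset.sup_const
    obtain ⟨q, hq⟩ := ((pirScheme eR eD σ enc).D ⟨0, hk⟩).support_nonempty
    exact ⟨q, by simpa using ⟨_, hq⟩⟩
end

section
/- Let n ≥ 2 and k ≥ 1 be integers. The number of vectors v = (v_1, …, v_k) with each v_i ∈ {0, 1, …, n−1}, with v not identically zero, and with Σ_{i=1}^k v_i ≡ 0 (mod n−1) (the sum taken over the integers), is exactly (n^k − 1)/(n − 1). -/
/-- The number of nonzero vectors `v ∈ {0,…,n-1}^k` whose integer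
coordinate sum is divisible by `n-1` is `(n^k - 1)/(n - 1)`. -/
theorem card_V (n k : ℕ) (hn : 2 ≤ n) (hk : 1 ≤ k) :
    (Finset.univ.filter (fun v : Fin k → Fin n =>
        (∃ i, (v i : ℕ) ≠ 0) ∧ (n - 1) ∣ ∑ i, (v i : ℕ))).card =
      (n ^ k - 1) / (n - 1) := by
  rw [← Nat.Ioc_filter_dvd_card_eq_div]
  have hdvd : ∀ v : Fin k → Fin n,
      (n - 1) ∣ ∑ i, (v i : ℕ) ↔ (n - 1) ∣ (finFunctionFinEquiv v : ℕ) := by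
    intro v
    rw [finFunctionFinEquiv_apply]
    refine Nat.ModEq.dvd_iff (m := n - 1) ?_ dvd_rfl
    have h1 : n ≡ 1 [MOD (n - 1)] := ((Nat.modEq_iff_dvd' (by omega)).2 dvd_rfl).symm
    refine Nat.ModEq.sum fun i _ => ?_
    simpa using ((h1.pow (i : ℕ)).mul_left (v i : ℕ)).symm
  have hne : ∀ v : Fin k → Fin n,
      (∃ i, (v i : ℕ) ≠ 0) ↔ (finFunctionFinEquiv v : ℕ) ≠ 0 := by
    intro v
    rw [finFunctionFinEquiv_apply, ne_eq, Finset.sum_eq_zero_iff]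
    have hp : n ≠ 0 := by omega
    simp [hp]
  refine Finset.card_bij (fun v _ => (finFunctionFinEquiv v : ℕ)) ?_ ?_ ?_
  · intro v hv
    rw [Finset.mem_filter, hdvd, hne] at hv
    have := (finFunctionFinEquiv v).isLt
    rw [Finset.mem_filter, Finset.mem_Ioc]
    exact ⟨⟨by omega, by omega⟩, hv.2.2⟩
  · intro a _ b _ h
    exact finFunctionFinEquiv.injective (Fin.ext h)
  · intro b hb
    rw [Finset.mem_filter, Finset.mem_Ioc] at hb
    refine ⟨finFunctionFinEquiv.symm ⟨b, by omega⟩, ?_, by rw [Equiv.apply_symm_apply]⟩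
    rw [Finset.mem_filter, hdvd, hne, Equiv.apply_symm_apply]
    exact ⟨Finset.mem_univ _, by simp only; omega, hb.2⟩
end

section
/- Let n ≥ 2 and k ≥ 1 be integers and let ℓ ∈ {1, …, k}. The number of pairs (r, v) with r ∈ {1, …, n} and v ∈ V satisfying v_ℓ ≠ 0 is exactly n^k. -/
/-- For a fixed record index `ℓ`, the number of pairs `(r, v)` with
`r ∈ {1,…,n}` and `v ∈ V` (nonzero vectors in `{0,…,n-1}^k` with coordinate sum
divisible by `n-1`) satisfying `v ℓ ≠ 0` is exactly `n^k`. -/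
theorem card_W1 (n k : ℕ) (hn : 2 ≤ n) (hk : 1 ≤ k) (ℓ : Fin k) :
    (Finset.univ.filter (fun p : Fin n × (Fin k → Fin n) =>
        ((∃ i, (p.2 i : ℕ) ≠ 0) ∧ (n - 1) ∣ ∑ i, (p.2 i : ℕ)) ∧
          (p.2 ℓ : ℕ) ≠ 0)).card = n ^ k := by
  have hcard : (Finset.univ : Finset (Fin k → Fin n)).card = n ^ k := by simp
  rw [← hcard]
  have hsum : ∀ v : Fin k → Fin n, ∑ i, (v i : ℕ) =
      (v ℓ : ℕ) + ∑ i ∈ Finset.univ.erase ℓ, (v i : ℕ) := fun v =>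
    (Finset.add_sum_erase _ (fun i => (v i : ℕ)) (Finset.mem_univ ℓ)).symm
  refine Finset.card_bij (fun p _ => Function.update p.2 ℓ p.1) (fun _ _ => Finset.mem_univ _) ?_ ?_
  · rintro ⟨r, v⟩ h ⟨r', v'⟩ h' heq
    simp only [Finset.mem_filter, Finset.mem_univ, true_and] at h h' heq
    have hr : r = r' := by simpa using congrFun heq ℓ
    have hoff : ∀ i, i ≠ ℓ → v i = v' i := fun i hi => by
      simpa [Function.update_of_ne hi] using congrFun heq i
    have hS : ∑ i ∈ Finset.univ.erase ℓ, (v i : ℕ) = ∑ i ∈ Finset.univ.erase ℓ, (v' i : ℕ) :=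
      Finset.sum_congr rfl fun i hi => by rw [hoff i (Finset.ne_of_mem_erase hi)]
    obtain ⟨⟨-, hd⟩, h0⟩ := h
    obtain ⟨⟨-, hd'⟩, h0'⟩ := h'
    rw [hsum] at hd hd'
    rw [← hS] at hd'
    have hl : (v ℓ : ℕ) = v' ℓ := by
      have h1 := (v ℓ).isLt
      have h2 := (v' ℓ).isLt
      rcases lt_trichotomy (v ℓ : ℕ) (v' ℓ) with hlt | he | hlt
      · have := Nat.le_of_dvd (by omega) (Nat.dvd_sub hd' hd)
        omega
      · exact he
      · have := Nat.le_of_dvd (by omega) (Nat.dvd_sub hd hd')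
        omega
    refine Prod.ext hr (funext fun i => ?_)
    by_cases hi : i = ℓ
    · subst hi; exact Fin.ext hl
    · exact hoff i hi
  · intro w _
    set S := ∑ i ∈ Finset.univ.erase ℓ, (w i : ℕ) with hSdef
    have hm : S % (n - 1) < n - 1 := Nat.mod_lt _ (by omega)
    let c : Fin n := ⟨(n - 1) - S % (n - 1), by omega⟩
    have hc : (c : ℕ) = (n - 1) - S % (n - 1) := rfl
    have hl : ((Function.update w ℓ c ℓ : Fin n) : ℕ) ≠ 0 := by
      rw [Function.update_self, hc]; omega
    refine ⟨(w ℓ, Function.update w ℓ c), ?_, by simp⟩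
    simp only [Finset.mem_filter, Finset.mem_univ, true_and]
    refine ⟨⟨⟨ℓ, hl⟩, ?_⟩, hl⟩
    have hS : ∑ i ∈ Finset.univ.erase ℓ, ((Function.update w ℓ c i : Fin n) : ℕ) = S :=
      Finset.sum_congr rfl fun i hi => by
        rw [Function.update_of_ne (Finset.ne_of_mem_erase hi)]
    rw [hsum, hS, Function.update_self, hc]
    refine ⟨1 + S / (n - 1), ?_⟩
    have := Nat.div_add_mod S (n - 1)
    rw [mul_add, mul_one]
    omega
end

section
/- Let n ≥ 2 and k ≥ 1 be integers and let s be an integer with 0 ≤ s ≤ k−1. The number of vectors v ∈ V such that v_1 = v_2 = ⋯ = v_s = 0 and v_{s+1} ≠ 0 is exactly n^{k−s−1}. -/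
theorem aux_exists (m S : ℕ) (hm : 1 ≤ m) : ∃ a, 1 ≤ a ∧ a ≤ m ∧ m ∣ a + S := by
  have h := Nat.mod_lt S (show 0 < m by omega)
  have h2 := Nat.div_add_mod S m
  refine ⟨m - S % m, by omega, by omega, S / m + 1, ?_⟩
  rw [Nat.mul_add]
  omega

theorem aux_unique (m S a b : ℕ) (ha : 1 ≤ a) (ha' : a ≤ m) (hb : 1 ≤ b) (hb' : b ≤ m)
    (h1 : m ∣ a + S) (h2 : m ∣ b + S) : a = b := by
  wlog hab : a ≤ b generalizing a b
  · exact (this b a hb hb' ha ha' h2 h1 (by omega)).symm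
  have h3 := Nat.dvd_sub h2 h1
  by_contra hne
  have := Nat.le_of_dvd (by omega) h3
  omega

/-- The number of vectors `v ∈ V` (nonzero vectors in
`{0,…,n-1}^k` with integer coordinate sum divisible by `n-1`) whose first `s`
coordinates are zero and whose `(s+1)`-st coordinate is nonzero is `n^(k-s-1)`. -/
theorem card_V_leading_zeros (n k s : ℕ) (hn : 2 ≤ n) (hk : 1 ≤ k) (hs : s ≤ k - 1) :
    (Finset.univ.filter (fun v : Fin k → Fin n =>
        ((∃ i, (v i : ℕ) ≠ 0) ∧ (n - 1) ∣ ∑ i, (v i : ℕ)) ∧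
          (∀ i : Fin k, (i : ℕ) < s → (v i : ℕ) = 0) ∧
          (v ⟨s, by omega⟩ : ℕ) ≠ 0)).card = n ^ (k - s - 1) := by
  have hsk : s < k := by omega
  set p : Fin k := ⟨s, hsk⟩ with hp
  let z : Fin n := ⟨0, by omega⟩
  have hsum : ∀ v : Fin k → Fin n, ∑ i, (v i : ℕ) =
      (v p : ℕ) + ∑ i ∈ Finset.univ.erase p, (v i : ℕ) := fun v =>
    (Finset.add_sum_erase _ (fun i => (v i : ℕ)) (Finset.mem_univ p)).symm
  have hupd : ∀ (v : Fin k → Fin n) (a : Fin n),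
      ∑ i ∈ Finset.univ.erase p, (Function.update v p a i : ℕ) =
        ∑ i ∈ Finset.univ.erase p, (v i : ℕ) := fun v a =>
    Finset.sum_congr rfl fun i hi => by
      rw [Function.update_of_ne (Finset.ne_of_mem_erase hi)]
  have hcard : (Fintype.piFinset
      (fun i : Fin k => if i ≤ p then ({z} : Finset (Fin n)) else Finset.univ)).card
      = n ^ (k - s - 1) := by
    rw [Fintype.card_piFinset]
    have : ∀ i : Fin k, (if i ≤ p then ({z} : Finset (Fin n)) else Finset.univ).card
        = if i ∈ Finset.Ioi p then n else 1 := by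
      intro i
      by_cases h : i ≤ p
      · simp [h, not_lt.mpr h]
      · simp [h, not_le.mp h]
    rw [Finset.prod_congr rfl fun i _ => this i, Finset.prod_ite_mem, Finset.univ_inter,
      Finset.prod_const, Fin.card_Ioi]
    congr 1
    simp [hp]
    omega
  rw [← hcard]
  refine Finset.card_bij (fun v _ => Function.update v p z) ?_ ?_ ?_
  · intro v hv
    simp only [Finset.mem_filter, Finset.mem_univ, true_and] at hv
    rw [Fintype.mem_piFinset]
    intro i
    by_cases h : i ≤ p
    · rw [if_pos h, Finset.mem_singleton]
      by_cases hi : i = p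
      · subst hi; simp
      · rw [Function.update_of_ne hi]
        have hip : i < p := lt_of_le_of_ne h hi
        exact Fin.ext (hv.2.1 i hip)
    · simp [h]
  · intro v hv w hw hvw
    simp only [Finset.mem_filter, Finset.mem_univ, true_and] at hv hw
    have hne : ∀ i, i ≠ p → v i = w i := fun i hi => by
      have := congrFun hvw i
      simpa [Function.update_of_ne hi] using this
    have hS : ∑ i ∈ Finset.univ.erase p, (v i : ℕ) = ∑ i ∈ Finset.univ.erase p, (w i : ℕ) :=
      Finset.sum_congr rfl fun i hi => by rw [hne i (Finset.ne_of_mem_erase hi)]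
    have h1 := hv.1.2
    have h2 := hw.1.2
    rw [hsum] at h1 h2
    rw [← hS] at h2
    have hv3 := hv.2.2
    have hw3 := hw.2.2
    have l1 := (v p).isLt
    have l2 := (w p).isLt
    have := aux_unique (n - 1) _ _ _ (by omega) (by omega) (by omega) (by omega) h1 h2
    funext i
    by_cases hi : i = p
    · subst hi; exact Fin.ext this
    · exact hne i hi
  · intro w hw
    rw [Fintype.mem_piFinset] at hw
    have hz : ∀ i, i ≤ p → w i = z := fun i hi => by
      have := hw i
      rwa [if_pos hi, Finset.mem_singleton] at this
    obtain ⟨a, ha1, ha2, had⟩ := aux_exists (n - 1)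
      (∑ i ∈ Finset.univ.erase p, (w i : ℕ)) (by omega)
    refine ⟨Function.update w p ⟨a, by omega⟩, ?_, ?_⟩
    · simp only [Finset.mem_filter, Finset.mem_univ, true_and]
      refine ⟨⟨⟨p, ?_⟩, ?_⟩, ?_, ?_⟩
      · rw [Function.update_self]; exact Nat.ne_of_gt ha1
      · rw [hsum, hupd, Function.update_self]; exact had
      · intro i hi
        have hip : i < p := hi
        rw [Function.update_of_ne hip.ne, hz i hip.le]
      · rw [Function.update_self]; exact Nat.ne_of_gt ha1
    · rw [Function.update_idem, ← hz p le_rfl, Function.update_eq_self]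
end

section
/- Let n ≥ 2 and k ≥ 1 be integers. The number of pairs (i, v) with i ∈ {1, …, k} and v ∈ V satisfying v_i ≠ 0 is exactly k·n^{k−1}. -/
/-- The number of pairs `(i, v)` with `i ∈ {1,…,k}` and `v ∈ V`
(nonzero vectors in `{0,…,n-1}^k` with integer coordinate sum divisible by `n-1`)
satisfying `v i ≠ 0` is exactly `k·n^(k-1)`. -/
theorem card_nonzero_entries (n k : ℕ) (hn : 2 ≤ n) (hk : 1 ≤ k) :
    (Finset.univ.filter (fun p : Fin k × (Fin k → Fin n) =>
        ((∃ i, (p.2 i : ℕ) ≠ 0) ∧ (n - 1) ∣ ∑ i, (p.2 i : ℕ)) ∧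
          (p.2 p.1 : ℕ) ≠ 0)).card = k * n ^ (k - 1) := by
  obtain ⟨m, rfl⟩ : ∃ m, n = m + 2 := ⟨n - 2, by omega⟩
  obtain ⟨l, rfl⟩ : ∃ l, k = l + 1 := ⟨k - 1, by omega⟩
  have hm : m + 2 - 1 = m + 1 := by omega
  rw [hm]
  have hc : (Finset.univ : Finset (Fin (l + 1) × (Fin l → Fin (m + 2)))).card
      = (l + 1) * (m + 2) ^ (l + 1 - 1) := by
    simp
  rw [← hc]
  refine Finset.card_bij (fun p _ => (p.1, fun j => p.2 (p.1.succAbove j))) ?_ ?_ ?_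
  · intro p _
    exact Finset.mem_univ _
  · rintro ⟨i, v⟩ hv ⟨j, w⟩ hw h
    simp only [Finset.mem_filter, Finset.mem_univ, true_and] at hv hw
    simp only [Prod.mk.injEq] at h
    obtain ⟨rfl, h⟩ := h
    obtain ⟨⟨-, hv1⟩, hv0⟩ := hv
    obtain ⟨⟨-, hw1⟩, hw0⟩ := hw
    have h' : ∀ j, v (i.succAbove j) = w (i.succAbove j) := fun j => congrFun h j
    rw [Fin.sum_univ_succAbove _ i] at hv1 hw1
    simp only [h'] at hv1
    have hvl := (v i).isLt
    have hwl := (w i).isLt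
    have key : (v i : ℕ) = w i := by
      have e : (v i : ℕ) ≡ w i [MOD (m + 1)] :=
        Nat.ModEq.add_right_cancel' _
          (((Nat.modEq_zero_iff_dvd).2 hv1).trans ((Nat.modEq_zero_iff_dvd).2 hw1).symm)
      rcases le_total (v i : ℕ) (w i) with hle | hle
      · have d := (Nat.modEq_iff_dvd' hle).1 e
        have := Nat.eq_zero_of_dvd_of_lt d (by omega)
        omega
      · have d := (Nat.modEq_iff_dvd' hle).1 e.symm
        have := Nat.eq_zero_of_dvd_of_lt d (by omega)
        omega
    refine Prod.ext rfl (funext fun j => ?_)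
    rcases Fin.eq_self_or_eq_succAbove i j with rfl | ⟨j, rfl⟩
    · exact Fin.ext key
    · exact h' j
  · rintro ⟨i, u⟩ -
    have hlt : (∑ j, (u j : ℕ)) % (m + 1) < m + 1 := Nat.mod_lt _ (Nat.succ_pos m)
    have hda := Nat.mod_add_div (∑ j, (u j : ℕ)) (m + 1)
    refine ⟨(i, i.insertNth (α := fun _ => Fin (m + 2))
      ⟨(m + 1) - (∑ j, (u j : ℕ)) % (m + 1), by omega⟩ u), ?_, ?_⟩
    · simp only [Finset.mem_filter, Finset.mem_univ, true_and]
      have h0 : (m + 1) - (∑ j, (u j : ℕ)) % (m + 1) ≠ 0 := by omega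
      refine ⟨⟨⟨i, by simpa using h0⟩, ?_⟩, by simpa using h0⟩
      rw [Fin.sum_univ_succAbove _ i]
      simp only [Fin.insertNth_apply_same, Fin.insertNth_apply_succAbove]
      refine ⟨(∑ j, (u j : ℕ)) / (m + 1) + 1, ?_⟩
      rw [mul_add, mul_one]
      omega
    · simp
end
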